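/- arXiv:1610.04535 — 2 statements merged into one kernel-verified Lean document; each statement's English description precedes it below -/
import Mathlib

section
/- Assume neither p nor q is a root of unity. Then every unital K-algebra endomorphism of the localization (A_p(1, 1, K_q[s,t]))_S is bijective, i.e. is a K-algebra automorphism (a quantum analogue of the Dixmier conjecture holds for this simple localization). -/
/-!
Write `R = A_S`. With `z = xy - yx` the relations become `yx = (p - 1)⁻¹ (z - 1)`,
`xy = (p - 1)⁻¹ (pz - 1)`, `xz = p zx`, `yz = p⁻¹ zy`, so `R` is spanned by the subspaces
`B0 * x^n` and `B0 * y^n`, where `B0` is the span of the monomials `z^a s^b t^c`. As `p` is not a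
root of unity, these subspaces are eigenspaces of conjugation by `z` with distinct eigenvalues, and
every subspace stable under that conjugation is homogeneous (`Presented.homogeneous`).

There is a map `ψ` from `R` to the quantum torus in `z, s, t, x` with `y ↦ (p - 1)⁻¹ (z - 1) x⁻¹`.
Its kernel is homogeneous, hence zero (`Presented.ψ_injective`). The units of the torus are the
multiples of monomials (`torus_unit`), and a monomial of negative `x`-degree is not in the image of
`ψ`, as elements of negative degree are multiples of `z - 1`. So the units of `R` are the multiples
of the monomials in `z, s, t` (`Presented.isMon_of_unit`).

Let `φ` be an endomorphism of `R`. The images of `z, s, t` are multiples of monomials. Since `q` is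
not a root of unity, `st = q ts` forces the `(s, t)`-exponents of `φ s` and `φ t` to have determinant
`1`, and as `φ z` commutes with both, `φ z = α z^a`. Comparing degrees in `φ x φ z = p φ z φ x` gives
`a = ±1`, and `φ x`, `φ y` are homogeneous of degrees `a`, `-a`. Substituting in the formula for `yx`
and setting `z = 1` (resp. `z = p⁻¹`) determines `α` and shows that `φ x`, `φ y` are `x`, `y` (resp.
`y`, `x`) up to units (`Presented.shape_pos`, `Presented.shape_neg`). The exponent matrix of
`φ z, φ s, φ t` is invertible over `ℤ`, so the range of `φ` contains all units, hence `x` and `y`,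
and `φ` is surjective. It is injective because `ψ ∘ φ` is injective on monomials and does not kill
`x` or `y`, so that its homogeneous kernel is zero (`Presented.injective_of`).
-/

noncomputable section

open FreeAlgebra

/-- Relations of the algebra `A_p(lam, mu, K_q[s,t])`; for `lam = mu = 1` this is
`A_p(1, 1, K_q[s,t])`: `xy - p·yx = 1`, `st = q·ts`, `s,t` commute with `x,y`. -/
inductive ExtWeylRel (K : Type*) [Field K] (p q lam mu : K) :
    FreeAlgebra K (Fin 4) → FreeAlgebra K (Fin 4) → Prop
  | weyl : ExtWeylRel K p q lam mu (ι K (0 : Fin 4) * ι K 1 - p • (ι K 1 * ι K 0)) 1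
  | st : ExtWeylRel K p q lam mu (ι K (2 : Fin 4) * ι K 3) (q • (ι K 3 * ι K 2))
  | sx : ExtWeylRel K p q lam mu (ι K (2 : Fin 4) * ι K 0) (lam • (ι K 0 * ι K 2))
  | sy : ExtWeylRel K p q lam mu (ι K (2 : Fin 4) * ι K 1) (lam⁻¹ • (ι K 1 * ι K 2))
  | tx : ExtWeylRel K p q lam mu (ι K (3 : Fin 4) * ι K 0) (mu • (ι K 0 * ι K 3))
  | ty : ExtWeylRel K p q lam mu (ι K (3 : Fin 4) * ι K 1) (mu⁻¹ • (ι K 1 * ι K 3))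

/-- The algebra `A_p(lam, mu, K_q[s,t])`. -/
abbrev ExtWeyl (K : Type*) [Field K] (p q lam mu : K) : Type _ :=
  RingQuot (ExtWeylRel K p q lam mu)

variable (K : Type*) [Field K] (p q : K)

/-- The generator `x` of `A = A_p(1, 1, K_q[s,t])`. -/
def wx : ExtWeyl K p q 1 1 := RingQuot.mkAlgHom K _ (ι K 0)
/-- The generator `y`. -/
def wy : ExtWeyl K p q 1 1 := RingQuot.mkAlgHom K _ (ι K 1)
/-- The generator `s`. -/
def ws : ExtWeyl K p q 1 1 := RingQuot.mkAlgHom K _ (ι K 2)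
/-- The generator `t`. -/
def wt : ExtWeyl K p q 1 1 := RingQuot.mkAlgHom K _ (ι K 3)
/-- The element `z = xy - yx`. -/
def wz : ExtWeyl K p q 1 1 := wx K p q * wy K p q - wy K p q * wx K p q

/-- The multiplicative (Ore) set `S` generated by `z, s, t`. -/
def locS : Submonoid (ExtWeyl K p q 1 1) :=
  Submonoid.closure {wz K p q, ws K p q, wt K p q}

variable [OreLocalization.OreSet (locS K p q)]

/-- The localization `A_S` of `A` at the Ore set `S`. -/
abbrev ALoc := OreLocalization (locS K p q) (ExtWeyl K p q 1 1)

/-- The image of `x` in `A_S`. -/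
def lx : ALoc K p q := OreLocalization.numeratorRingHom (wx K p q)
/-- The image of `y` in `A_S`. -/
def ly : ALoc K p q := OreLocalization.numeratorRingHom (wy K p q)
/-- The image of `s` in `A_S`. -/
def ls : ALoc K p q := OreLocalization.numeratorRingHom (ws K p q)
/-- The image of `t` in `A_S`. -/
def lt : ALoc K p q := OreLocalization.numeratorRingHom (wt K p q)
/-- The image of `z` in `A_S`. -/
def lz : ALoc K p q := OreLocalization.numeratorRingHom (wz K p q)

/-- `z` as a unit of `A_S`. -/
def uz : (ALoc K p q)ˣ :=
  OreLocalization.numeratorUnit ⟨wz K p q, Submonoid.subset_closure (by simp)⟩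
/-- `s` as a unit of `A_S`. -/
def us : (ALoc K p q)ˣ :=
  OreLocalization.numeratorUnit ⟨ws K p q, Submonoid.subset_closure (by simp)⟩
/-- `t` as a unit of `A_S`. -/
def ut : (ALoc K p q)ˣ :=
  OreLocalization.numeratorUnit ⟨wt K p q, Submonoid.subset_closure (by simp)⟩

namespace DixLoc

/-! ### The quantum torus -/

section Torus

variable {K : Type*} [Field K]

/-- Exponents of the monomials `z^a s^b t^c x^d`, arranged as `((a, b, c), d)`. -/
abbrev Ex : Type := (ℤ × ℤ × ℤ) × ℤ

/-- The scalar `χ` with `m_g * m_h = χ g h • m_{g + h}` for the monomials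
`m_((a, b, c), d) = z^a s^b t^c x^d`, coming from `x z = P z x` and `s t = Q t s`. -/
def chi (P Q : Kˣ) (g h : Ex) : Kˣ := P ^ (g.2 * h.1.1) * Q ^ (-(g.1.2.2 * h.1.2.1))

/-- The quantum torus with basis the monomials `z^a s^b t^c x^d` (`a, b, c, d ∈ ℤ`), where
`x z = P z x`, `s t = Q t s` and the other pairs of generators commute. -/
def QTorus (_P _Q : Kˣ) : Type _ := Ex →₀ K

variable (P Q : Kˣ)

instance : AddCommGroup (QTorus P Q) := inferInstanceAs (AddCommGroup (Ex →₀ K))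
instance : Module K (QTorus P Q) := inferInstanceAs (Module K (Ex →₀ K))

/-- The basis monomial of exponent `g`. -/
def mon (g : Ex) : QTorus P Q := Finsupp.single g (1 : K)

/-- The linear map with prescribed values on monomials. -/
def lin {V : Type*} [AddCommGroup V] [Module K V] (f : Ex → V) : QTorus P Q →ₗ[K] V :=
  Finsupp.linearCombination K f

lemma lin_mon {V : Type*} [AddCommGroup V] [Module K V] (f : Ex → V) (g : Ex) :
    lin P Q f (mon P Q g) = f g :=
  (Finsupp.linearCombination_single K 1 g).trans (one_smul K _)

/-- The twisted multiplication as a bilinear map. -/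
def tmul : QTorus P Q →ₗ[K] QTorus P Q →ₗ[K] QTorus P Q :=
  lin P Q fun g => lin P Q fun h => (chi P Q g h : K) • mon P Q (g + h)

lemma tmul_mon (g h : Ex) :
    tmul P Q (mon P Q g) (mon P Q h) = (chi P Q g h : K) • mon P Q (g + h) := by
  rw [tmul, lin_mon, lin_mon]

variable {P Q} in
/-- Linear maps out of the torus agree as soon as they agree on monomials. -/
lemma hom_ext {V : Type*} [AddCommGroup V] [Module K V] {f g : QTorus P Q →ₗ[K] V}
    (h : ∀ e, f (mon P Q e) = g (mon P Q e)) : f = g :=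
  Finsupp.lhom_ext' fun e => LinearMap.ext_ring (h e)

lemma chi_cocycle (g h k : Ex) :
    chi P Q g h * chi P Q (g + h) k = chi P Q h k * chi P Q g (h + k) := by
  simp only [chi, Prod.fst_add, Prod.snd_add]
  have e1 : ∀ a b c d : ℤ, P ^ a * Q ^ b * (P ^ c * Q ^ d) = P ^ (a + c) * Q ^ (b + d) := by
    intro a b c d; rw [zpow_add, zpow_add]; exact mul_mul_mul_comm _ _ _ _
  rw [e1, e1]
  congr 2 <;> ring

lemma tmul_assoc (u v w : QTorus P Q) :
    tmul P Q (tmul P Q u v) w = tmul P Q u (tmul P Q v w) := by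
  have : (LinearMap.llcomp K _ _ _ (tmul P Q)) ∘ₗ (tmul P Q) =
      (LinearMap.llcomp K _ _ _).flip (tmul P Q) ∘ₗ
        (LinearMap.llcomp K (QTorus P Q) (QTorus P Q) (QTorus P Q)) ∘ₗ (tmul P Q) := by
    refine hom_ext fun g => hom_ext fun h => hom_ext fun k => ?_
    have := congrArg (fun c : Kˣ => (c : K)) (chi_cocycle P Q g h k)
    simp only [Units.val_mul] at this
    simp [tmul_mon, smul_smul, this, add_assoc]
  have := congrArg (fun f => f u v w) this
  simpa using this

instance : One (QTorus P Q) := ⟨mon P Q 0⟩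
instance : Mul (QTorus P Q) := ⟨fun u v => tmul P Q u v⟩

lemma torus_mul_def (u v : QTorus P Q) : u * v = tmul P Q u v := rfl
lemma torus_one_def : (1 : QTorus P Q) = mon P Q 0 := rfl

instance : Ring (QTorus P Q) :=
  { (inferInstance : AddCommGroup (QTorus P Q)) with
    one := 1
    mul := (· * ·)
    left_distrib := fun u v w => by simp [torus_mul_def]
    right_distrib := fun u v w => by simp [torus_mul_def]
    zero_mul := fun u => by simp [torus_mul_def]
    mul_zero := fun u => by simp [torus_mul_def]
    mul_assoc := tmul_assoc P Q
    one_mul := fun u => by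
      have : tmul P Q (mon P Q 0) = LinearMap.id := hom_ext fun e => by simp [tmul_mon, chi]
      simp [torus_mul_def, torus_one_def, this]
    mul_one := fun u => by
      have : (tmul P Q).flip (mon P Q 0) = LinearMap.id :=
        hom_ext fun e => by simp [tmul_mon, chi]
      simpa [torus_mul_def, torus_one_def] using congrArg (fun f => f u) this }

instance : Algebra K (QTorus P Q) :=
  Algebra.ofModule (fun r x y => by simp [torus_mul_def]) (fun r x y => by simp [torus_mul_def])

lemma mon_mul (g h : Ex) : mon P Q g * mon P Q h = (chi P Q g h : K) • mon P Q (g + h) :=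
  tmul_mon P Q g h

variable {P Q}

/-- The coefficient of the monomial of exponent `g`. -/
def coeff (g : Ex) : QTorus P Q →ₗ[K] K := Finsupp.lapply g

/-- The exponents occurring in an element. -/
def supp (u : QTorus P Q) : Finset Ex := Finsupp.support u

lemma mem_supp {u : QTorus P Q} {g : Ex} : g ∈ supp u ↔ coeff g u ≠ 0 :=
  Finsupp.mem_support_iff

lemma coeff_mon (g h : Ex) : coeff g (mon P Q h) = if h = g then 1 else 0 :=
  Finsupp.single_apply

lemma torus_ext {u v : QTorus P Q} (h : ∀ g, coeff g u = coeff g v) : u = v :=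
  Finsupp.ext h

lemma sum_mon (u : QTorus P Q) : u = ∑ g ∈ supp u, coeff g u • mon P Q g := by
  conv_lhs => rw [← Finsupp.sum_single (f := (u : Ex →₀ K))]
  refine Finset.sum_congr rfl fun g _ => ?_
  exact (Finsupp.smul_single_one g _).symm

lemma coeff_mul (u v : QTorus P Q) (k : Ex) :
    coeff k (u * v) = ∑ g ∈ supp u, ∑ h ∈ supp v,
      if g + h = k then coeff g u * coeff h v * chi P Q g h else 0 := by
  conv_lhs => rw [sum_mon u, sum_mon v, Finset.sum_mul_sum]
  simp only [map_sum, smul_mul_smul_comm, mon_mul, map_smul, coeff_mon, smul_eq_mul]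
  simp [mul_assoc]

/-- A product of nonzero coefficients survives at a uniquely represented exponent. -/
lemma coeff_mul_unique {u v : QTorus P Q} {g h : Ex} (hg : g ∈ supp u) (hh : h ∈ supp v)
    (huniq : UniqueAdd (supp u) (supp v) g h) : coeff (g + h) (u * v) ≠ 0 := by
  rw [coeff_mul, Finset.sum_eq_single g, Finset.sum_eq_single h, if_pos rfl]
  · exact mul_ne_zero (mul_ne_zero (mem_supp.1 hg) (mem_supp.1 hh)) (Units.ne_zero _)
  · intro b hb hne
    exact if_neg fun e => hne (huniq hg hb e).2
  · exact fun hn => absurd hh hn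
  · intro b hb hne
    exact Finset.sum_eq_zero fun c hc => if_neg fun e => hne (huniq hb hc e).1
  · exact fun hn => absurd hg hn

lemma supp_nonempty {u : QTorus P Q} (h : u ≠ 0) : (supp u).Nonempty :=
  Finsupp.support_nonempty_iff.2 h

lemma mon_ne_zero (g : Ex) : mon P Q g ≠ 0 := by
  intro h
  have := congrArg (coeff g) h
  simp [coeff_mon] at this

instance : Nontrivial (QTorus P Q) := ⟨1, 0, mon_ne_zero 0⟩

instance : NoZeroDivisors (QTorus P Q) where
  eq_zero_or_eq_zero_of_mul_eq_zero := by
    intro u v huv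
    by_contra! hne
    obtain ⟨g, hg, h, hh, hu⟩ := UniqueSums.uniqueAdd_of_nonempty
      (supp_nonempty hne.1) (supp_nonempty hne.2)
    exact coeff_mul_unique hg hh hu (by rw [huv, map_zero])

/-- The units of the quantum torus are the nonzero multiples of monomials: a product with two
uniquely represented exponents cannot equal `1`. -/
lemma torus_unit {u v : QTorus P Q} (huv : u * v = 1) :
    ∃ (c d : K) (g : Ex), c ≠ 0 ∧ d ≠ 0 ∧ u = c • mon P Q g ∧ v = d • mon P Q (-g) := by
  have hu : u ≠ 0 := by rintro rfl; simp at huv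
  have hv : v ≠ 0 := by rintro rfl; simp at huv
  have key : ∀ g h, g ∈ supp u → h ∈ supp v → UniqueAdd (supp u) (supp v) g h → g + h = 0 := by
    intro g h hg hh hun
    by_contra hne
    apply coeff_mul_unique hg hh hun
    rw [huv, torus_one_def, coeff_mon, if_neg (Ne.symm hne)]
  have hcard : (supp u).card * (supp v).card ≤ 1 := by
    by_contra! hlt
    obtain ⟨⟨a, b⟩, h1, ⟨a', b'⟩, h2, hne, hu1, hu2⟩ :=
      TwoUniqueSums.uniqueAdd_of_one_lt_card hlt
    rw [Finset.mem_product] at h1 h2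
    have e1 := key _ _ h1.1 h1.2 hu1
    have e2 := key _ _ h2.1 h2.2 hu2
    have := hu1 h2.1 h2.2 (e2.trans e1.symm)
    exact hne (Prod.ext this.1.symm this.2.symm)
  have pu := (supp_nonempty hu).card_pos
  have pv := (supp_nonempty hv).card_pos
  have cu : (supp u).card = 1 := by nlinarith
  have cv : (supp v).card = 1 := by nlinarith
  obtain ⟨g, hg⟩ := Finset.card_eq_one.1 cu
  obtain ⟨h, hh⟩ := Finset.card_eq_one.1 cv
  have gh : g + h = 0 := key g h (by simp [hg]) (by simp [hh]) (by
    intro a b ha hb _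
    rw [hg, Finset.mem_singleton] at ha
    rw [hh, Finset.mem_singleton] at hb
    exact ⟨ha, hb⟩)
  have hgh : h = -g := (neg_eq_of_add_eq_zero_right gh).symm
  refine ⟨coeff g u, coeff h v, g, mem_supp.1 (by simp [hg]), mem_supp.1 (by simp [hh]), ?_, ?_⟩
  · conv_lhs => rw [sum_mon u, hg, Finset.sum_singleton]
  · rw [← hgh]
    conv_lhs => rw [sum_mon v, hh, Finset.sum_singleton]

/-- The functional setting `z = r` and `s = t = x = 1` in the monomial basis `z^a s^b t^c x^d`.
It is not multiplicative, but compatible with left multiplication by `z`. -/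
def evz (r : Kˣ) : QTorus P Q →ₗ[K] K :=
  lin P Q fun g => ((r ^ g.1.1 : Kˣ) : K)

lemma evz_mon (r : Kˣ) (g : Ex) : evz r (mon P Q g) = ((r ^ g.1.1 : Kˣ) : K) :=
  lin_mon P Q _ g

lemma evz_mul (r : Kˣ) (u : QTorus P Q) :
    evz r (mon P Q ((1, 0, 0), 0) * u) = r * evz r u := by
  have : evz r ∘ₗ (LinearMap.mulLeft K (mon P Q ((1, 0, 0), 0))) = (r : K) • evz r := by
    refine hom_ext fun e => ?_
    simp [mon_mul, chi, evz_mon, zpow_add]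
  simpa using congrArg (fun f => f u) this

end Torus

/-! ### Eigenspaces and commutation up to scalars -/

section Separation

variable {K : Type*} [Field K]

/-- An invariant subspace containing a sum of eigenvectors with distinct eigenvalues contains
every summand. -/
lemma separate {V : Type*} [AddCommGroup V] [Module K V] (f : V →ₗ[K] V) (I : Submodule K V)
    (hI : ∀ v ∈ I, f v ∈ I) (μ : ℤ → K) (hμ : Function.Injective μ) (D : Finset ℤ) :
    ∀ u : ℤ → V, (∀ d, f (u d) = μ d • u d) → ∑ d ∈ D, u d ∈ I → ∀ d ∈ D, u d ∈ I := by
  induction D using Finset.induction_on with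
  | empty => simp
  | insert e D he ih =>
    intro u hu hs
    have h1 : ∀ d ∈ D, u d ∈ I := by
      intro d hd
      have h2 : (μ d - μ e) • u d ∈ I := by
        refine ih (fun d => (μ d - μ e) • u d) (fun d => ?_) ?_ d hd
        · rw [map_smul, hu, smul_comm]
        · have h3 := I.sub_mem (hI _ hs) (I.smul_mem (μ e) hs)
          rw [map_sum, Finset.smul_sum, ← Finset.sum_sub_distrib, Finset.sum_insert he, hu e,
            sub_self, zero_add] at h3
          simpa only [sub_smul, hu] using h3
      have hne : μ d - μ e ≠ 0 := sub_ne_zero.2 fun h => he (hμ h ▸ hd)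
      exact (I.smul_mem_iff hne).1 h2
    intro d hd
    rcases Finset.mem_insert.1 hd with rfl | hd
    · rw [Finset.sum_insert he] at hs
      exact (I.add_mem_iff_left (I.sum_mem h1)).1 hs
    · exact h1 d hd

variable {R : Type*} [Ring R] [Algebra K R]

lemma qcomm_symm {c : Kˣ} {u v : R} (h : u * v = (c : K) • (v * u)) :
    v * u = ((c⁻¹ : Kˣ) : K) • (u * v) := by
  rw [h, smul_smul, Units.inv_mul, one_smul]

lemma qcomm_pow {c : Kˣ} {u v : R} (h : u * v = (c : K) • (v * u)) (n : ℕ) :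
    u ^ n * v = ((c ^ n : Kˣ) : K) • (v * u ^ n) := by
  induction n with
  | zero => simp
  | succ n ih =>
    rw [pow_succ, mul_assoc, h, mul_smul_comm, ← mul_assoc, ih, smul_mul_assoc, smul_smul,
      mul_assoc, pow_succ' c, Units.val_mul]

lemma qcomm_zpow {c : Kˣ} {u : R} {v : Rˣ} (h : u * v = (c : K) • (v * u)) (n : ℤ) :
    u * (v ^ n : Rˣ) = ((c ^ n : Kˣ) : K) • ((v ^ n : Rˣ) * u) := by
  have hinv : u * (v⁻¹ : Rˣ) = ((c⁻¹ : Kˣ) : K) • ((v⁻¹ : Rˣ) * u) := by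
    have h1 : (v⁻¹ : Rˣ) * (u * v) * (v⁻¹ : Rˣ) = (c : K) • (u * (v⁻¹ : Rˣ)) := by
      rw [h]; simp [← mul_assoc]
    rw [← mul_assoc, Units.mul_inv_cancel_right] at h1
    rw [h1, smul_smul, Units.inv_mul, one_smul]
  induction n using Int.induction_on with
  | zero => simp
  | succ n ih =>
    rw [zpow_add_one, Units.val_mul, ← mul_assoc, ih, smul_mul_assoc, mul_assoc, h,
      mul_smul_comm, smul_smul, zpow_add_one, Units.val_mul, mul_assoc]
  | pred n ih =>
    rw [zpow_sub_one, Units.val_mul, ← mul_assoc, ih, smul_mul_assoc, mul_assoc, hinv,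
      mul_smul_comm, smul_smul, zpow_sub_one, Units.val_mul, mul_assoc]

end Separation

/-! ### The grading by `x`-degree -/

/-- An algebra generated by `x, y, z^±1, s^±1, t^±1` subject to the relations of `A_S`, solved for
`x y` and `y x`, together with a map to the quantum torus in which
`y ↦ (P - 1)⁻¹ (z - 1) x⁻¹`. The field `gen` says that the generators and the inverses of `z, s, t`
generate the algebra. -/
structure Presented {K : Type*} [Field K] (P Q : Kˣ) (R : Type*) [Ring R] [Algebra K R] where
  (X Y : R)
  (Z S T : Rˣ)
  xy : X * Y = ((P : K) - 1)⁻¹ • ((P : K) • (Z : R) - 1)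
  yx : Y * X = ((P : K) - 1)⁻¹ • ((Z : R) - 1)
  xz : X * Z = (P : K) • (Z * X)
  yz : Y * Z = ((P⁻¹ : Kˣ) : K) • (Z * Y)
  xs : X * S = S * X
  ys : Y * S = S * Y
  xt : X * T = T * X
  yt : Y * T = T * Y
  sz : Z * S = S * Z
  tz : Z * T = T * Z
  st : (S : R) * T = (Q : K) • (T * S)
  gen : ∀ M : Submodule K R, 1 ∈ M → (∀ u ∈ M, u * X ∈ M) → (∀ u ∈ M, u * Y ∈ M) →
    (∀ u ∈ M, ∀ n : ℤ, u * (Z ^ n : Rˣ) ∈ M) → (∀ u ∈ M, ∀ n : ℤ, u * (S ^ n : Rˣ) ∈ M) →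
    (∀ u ∈ M, ∀ n : ℤ, u * (T ^ n : Rˣ) ∈ M) → M = ⊤
  ψ : R →ₐ[K] QTorus P Q
  ψX : ψ X = mon P Q ((0, 0, 0), 1)
  ψY : ψ Y = ((P : K) - 1)⁻¹ • ((mon P Q ((1, 0, 0), 0) - 1) * mon P Q ((0, 0, 0), -1))
  ψZ : ψ Z = mon P Q ((1, 0, 0), 0)
  ψS : ψ S = mon P Q ((0, 1, 0), 0)
  ψT : ψ T = mon P Q ((0, 0, 1), 0)

namespace Presented

variable {K : Type*} [Field K] {P Q : Kˣ} {R : Type*} [Ring R] [Algebra K R]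
  (D : Presented P Q R)

/-- The unit `z^a s^b t^c`. -/
def m (g : ℤ × ℤ × ℤ) : Rˣ := D.Z ^ g.1 * D.S ^ g.2.1 * D.T ^ g.2.2

/-- `x^d` for `d ≥ 0` and `y^(-d)` for `d < 0`. -/
def w : ℤ → R
  | Int.ofNat n => D.X ^ n
  | Int.negSucc n => D.Y ^ (n + 1)

lemma w_nat (n : ℕ) : D.w n = D.X ^ n := rfl

lemma w_neg (n : ℕ) : D.w (-n) = D.Y ^ n := by
  cases n with
  | zero => simpa using D.w_nat 0
  | succ n => rfl

lemma m_zero : D.m 0 = 1 := by simp [m]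

lemma m_mul (g h : ℤ × ℤ × ℤ) :
    (D.m g * D.m h : R) = ((Q ^ (-(g.2.2 * h.2.1)) : Kˣ) : K) • (D.m (g + h) : R) := by
  have hZS : Commute D.Z D.S := D.sz
  have hZT : Commute D.Z D.T := D.tz
  have h1 : ((D.T ^ g.2.2 : Rˣ) : R) * (D.S ^ h.2.1 : Rˣ) =
      ((Q ^ (-(g.2.2 * h.2.1)) : Kˣ) : K) • ((D.S ^ h.2.1 : Rˣ) * (D.T ^ g.2.2 : Rˣ) : R) := by
    have h2 := qcomm_zpow (qcomm_symm (qcomm_zpow D.st g.2.2)) h.2.1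
    rw [h2]
    rw [← zpow_neg, ← zpow_mul, neg_mul]
  have h3 : (D.m g * D.m h : Rˣ) = D.Z ^ (g.1 + h.1) * D.S ^ g.2.1 *
      (D.T ^ g.2.2 * D.S ^ h.2.1) * D.T ^ h.2.2 := by
    have c1 := ((hZS.zpow_zpow h.1 g.2.1)).eq
    have c2 := ((hZT.zpow_zpow h.1 g.2.2)).eq
    simp only [m]
    calc _ = D.Z ^ g.1 * D.S ^ g.2.1 * (D.T ^ g.2.2 * D.Z ^ h.1) * D.S ^ h.2.1 * D.T ^ h.2.2 := by
          group
      _ = D.Z ^ g.1 * (D.S ^ g.2.1 * D.Z ^ h.1) * D.T ^ g.2.2 * D.S ^ h.2.1 * D.T ^ h.2.2 := by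
          rw [← c2]; group
      _ = _ := by rw [← c1]; group
  have h4 := congrArg (fun u : Rˣ => (u : R)) h3
  simp only [Units.val_mul] at h4
  rw [h4, h1, mul_smul_comm, smul_mul_assoc]
  congr 1
  simp only [m, Prod.fst_add, Prod.snd_add, zpow_add, Units.val_mul, mul_assoc]

lemma w_Z (d : ℤ) : D.w d * D.Z = ((P ^ d : Kˣ) : K) • (D.Z * D.w d) := by
  obtain ⟨n, rfl | rfl⟩ := d.eq_nat_or_neg
  · rw [w_nat, qcomm_pow D.xz, zpow_natCast]
  · rw [w_neg, qcomm_pow D.yz, inv_pow, zpow_neg, zpow_natCast]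

lemma w_comm_of {v : R} (hx : D.X * v = v * D.X) (hy : D.Y * v = v * D.Y) (d : ℤ) :
    D.w d * v = v * D.w d := by
  obtain ⟨n, rfl | rfl⟩ := d.eq_nat_or_neg
  · rw [w_nat]; exact (Commute.pow_left (show Commute _ _ from hx) n).eq
  · rw [w_neg]; exact (Commute.pow_left (show Commute _ _ from hy) n).eq

lemma w_m (d : ℤ) (g : ℤ × ℤ × ℤ) :
    D.w d * D.m g = ((P ^ (d * g.1) : Kˣ) : K) • (D.m g * D.w d) := by
  have h1 := qcomm_zpow (D.w_Z d) g.1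
  have h2 : Commute (D.w d) ((D.S ^ g.2.1 : Rˣ) : R) :=
    Commute.units_zpow_right (show Commute (D.w d) D.S from D.w_comm_of D.xs D.ys d) _
  have h3 : Commute (D.w d) ((D.T ^ g.2.2 : Rˣ) : R) :=
    Commute.units_zpow_right (show Commute (D.w d) D.T from D.w_comm_of D.xt D.yt d) _
  rw [← zpow_mul] at h1
  simp only [m, Units.val_mul]
  rw [← mul_assoc, ← mul_assoc, h1, smul_mul_assoc, smul_mul_assoc]
  congr 1
  rw [mul_assoc _ (D.w d), h2.eq, ← mul_assoc, mul_assoc _ (D.w d), h3.eq, ← mul_assoc]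

/-- The span of the monomials `z^a s^b t^c`, that is, the part of `x`-degree `0`. -/
def B0 : Submodule K R := Submodule.span K (Set.range fun g => (D.m g : R))

lemma m_mem (g : ℤ × ℤ × ℤ) : (D.m g : R) ∈ D.B0 := Submodule.subset_span ⟨g, rfl⟩

lemma one_mem : (1 : R) ∈ D.B0 := by simpa [m_zero] using D.m_mem 0

lemma B0_mul {F G : R} (hF : F ∈ D.B0) (hG : G ∈ D.B0) : F * G ∈ D.B0 := by
  have : D.B0 * D.B0 ≤ D.B0 := by
    conv_lhs => rw [B0, Submodule.span_mul_span]
    rw [Submodule.span_le]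
    rintro _ ⟨_, ⟨g, rfl⟩, _, ⟨h, rfl⟩, rfl⟩
    simp only [SetLike.mem_coe]
    rw [m_mul]
    exact D.B0.smul_mem _ (D.m_mem _)
  exact this (Submodule.mul_mem_mul hF hG)

lemma Z_mem (n : ℤ) : ((D.Z ^ n : Rˣ) : R) ∈ D.B0 := by simpa [m] using D.m_mem (n, 0, 0)
lemma S_mem (n : ℤ) : ((D.S ^ n : Rˣ) : R) ∈ D.B0 := by simpa [m] using D.m_mem (0, n, 0)
lemma T_mem (n : ℤ) : ((D.T ^ n : Rˣ) : R) ∈ D.B0 := by simpa [m] using D.m_mem (0, 0, n)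

lemma w_B0 (d : ℤ) {F : R} (hF : F ∈ D.B0) : ∃ F' ∈ D.B0, D.w d * F = F' * D.w d := by
  induction hF using Submodule.span_induction with
  | mem x hx =>
    obtain ⟨g, rfl⟩ := hx
    exact ⟨_, D.B0.smul_mem _ (D.m_mem g), by rw [w_m, smul_mul_assoc]⟩
  | zero => exact ⟨0, D.B0.zero_mem, by simp⟩
  | add x y _ _ hx hy =>
    obtain ⟨a, ha, ha'⟩ := hx
    obtain ⟨b, hb, hb'⟩ := hy
    exact ⟨a + b, D.B0.add_mem ha hb, by rw [mul_add, add_mul, ha', hb']⟩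
  | smul c x _ hx =>
    obtain ⟨a, ha, ha'⟩ := hx
    exact ⟨c • a, D.B0.smul_mem _ ha, by rw [mul_smul_comm, smul_mul_assoc, ha']⟩

lemma B0_w (d : ℤ) {F : R} (hF : F ∈ D.B0) : ∃ F' ∈ D.B0, F * D.w d = D.w d * F' := by
  induction hF using Submodule.span_induction with
  | mem x hx =>
    obtain ⟨g, rfl⟩ := hx
    exact ⟨_, D.B0.smul_mem _ (D.m_mem g), by
      rw [mul_smul_comm, qcomm_symm (D.w_m d g)]⟩
  | zero => exact ⟨0, D.B0.zero_mem, by simp⟩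
  | add x y _ _ hx hy =>
    obtain ⟨a, ha, ha'⟩ := hx
    obtain ⟨b, hb, hb'⟩ := hy
    exact ⟨a + b, D.B0.add_mem ha hb, by rw [mul_add, add_mul, ha', hb']⟩
  | smul c x _ hx =>
    obtain ⟨a, ha, ha'⟩ := hx
    exact ⟨c • a, D.B0.smul_mem _ ha, by rw [mul_smul_comm, smul_mul_assoc, ha']⟩

lemma Z_comm_B0 {F : R} (hF : F ∈ D.B0) : (D.Z : R) * F = F * D.Z := by
  induction hF using Submodule.span_induction with
  | mem x hx =>
    obtain ⟨g, rfl⟩ := hx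
    have h1 := D.m_mul (1, 0, 0) g
    have h2 := D.m_mul g (1, 0, 0)
    have h3 : D.m (1, 0, 0) = D.Z := by simp [m]
    simp only [h3] at h1 h2
    rw [h1, h2, add_comm]
    simp
  | zero => simp
  | add x y _ _ hx hy => rw [mul_add, add_mul, hx, hy]
  | smul c x _ hx => rw [mul_smul_comm, smul_mul_assoc, hx]

lemma Zpow_comm_B0 {F : R} (hF : F ∈ D.B0) (n : ℤ) :
    ((D.Z ^ n : Rˣ) : R) * F = F * (D.Z ^ n : Rˣ) :=
  (Commute.units_zpow_right (show Commute F D.Z from (D.Z_comm_B0 hF).symm) n).eq.symm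

/-- The part `B0 * w d` of `x`-degree `d`. -/
def N (d : ℤ) : Submodule K R := D.B0.map (LinearMap.mulRight K (D.w d))

lemma mem_N {d : ℤ} {u : R} : u ∈ D.N d ↔ ∃ F ∈ D.B0, F * D.w d = u := by
  simp [N, Submodule.mem_map]

lemma w_X (d : ℤ) : ∃ F ∈ D.B0, D.w d * D.X = F * D.w (d + 1) := by
  rcases d with n | n
  · exact ⟨1, D.one_mem, by rw [one_mul]; exact (pow_succ _ _).symm⟩
  · have h1 : Int.negSucc n + 1 = -(n : ℤ) := by omega
    have h2 : D.w (Int.negSucc n) = D.w (-n) * D.Y := by rw [w_neg]; exact pow_succ _ _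
    obtain ⟨F, hF, hF'⟩ := D.w_B0 (-n) (F := D.Y * D.X) (by
      rw [D.yx]
      exact D.B0.smul_mem _ (D.B0.sub_mem (by simpa using D.Z_mem 1) D.one_mem))
    exact ⟨F, hF, by rw [h1, h2, mul_assoc, hF']⟩

lemma w_Y (d : ℤ) : ∃ F ∈ D.B0, D.w d * D.Y = F * D.w (d - 1) := by
  by_cases hd : d ≤ 0
  · obtain ⟨n, rfl⟩ : ∃ n : ℕ, d = -n := ⟨d.natAbs, by omega⟩
    have h1 : -(n : ℤ) - 1 = -((n + 1 : ℕ) : ℤ) := by push_cast; ring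
    exact ⟨1, D.one_mem, by rw [one_mul, h1, w_neg, w_neg, pow_succ]⟩
  · obtain ⟨n, rfl⟩ : ∃ n : ℕ, d = (n + 1 : ℕ) := ⟨(d - 1).natAbs, by omega⟩
    have h1 : ((n + 1 : ℕ) : ℤ) - 1 = n := by push_cast; ring
    have h2 : D.w ((n + 1 : ℕ) : ℤ) = D.w n * D.X := by rw [w_nat, w_nat, pow_succ]
    obtain ⟨F, hF, hF'⟩ := D.w_B0 n (F := D.X * D.Y) (by
      rw [D.xy]
      exact D.B0.smul_mem _ (D.B0.sub_mem (D.B0.smul_mem _ (by simpa using D.Z_mem 1)) D.one_mem))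
    exact ⟨F, hF, by rw [h1, h2, mul_assoc, hF']⟩

lemma iSup_N : ⨆ d, D.N d = ⊤ := by
  have step : ∀ v : R, (∀ d, ∃ e, ∃ F ∈ D.B0, D.w d * v = F * D.w e) →
      ∀ u ∈ ⨆ d, D.N d, u * v ∈ ⨆ d, D.N d := by
    intro v hv u hu
    refine Submodule.iSup_induction D.N (motive := fun u => u * v ∈ ⨆ d, D.N d) hu ?_ ?_ ?_
    · intro d x hx
      obtain ⟨F, hF, rfl⟩ := D.mem_N.1 hx
      obtain ⟨e, G, hG, hG'⟩ := hv d
      rw [mul_assoc, hG', ← mul_assoc]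
      exact Submodule.mem_iSup_of_mem e (D.mem_N.2 ⟨_, D.B0_mul hF hG, rfl⟩)
    · simp
    · intro x y hx hy
      rw [add_mul]; exact Submodule.add_mem _ hx hy
  have step0 : ∀ v ∈ D.B0, ∀ u ∈ ⨆ d, D.N d, u * v ∈ ⨆ d, D.N d := fun v hv =>
    step v fun d => ⟨d, D.w_B0 d hv⟩
  refine D.gen _ ?_ (step _ fun d => ⟨_, D.w_X d⟩) (step _ fun d => ⟨_, D.w_Y d⟩)
    (fun u hu n => step0 _ (D.Z_mem n) u hu) (fun u hu n => step0 _ (D.S_mem n) u hu)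
    (fun u hu n => step0 _ (D.T_mem n) u hu)
  exact Submodule.mem_iSup_of_mem 0 (D.mem_N.2 ⟨1, D.one_mem, by
    rw [one_mul]; exact pow_zero _⟩)

lemma N_Z {d : ℤ} {u : R} (hu : u ∈ D.N d) (a : ℤ) :
    u * (D.Z ^ a : Rˣ) = ((P ^ (d * a) : Kˣ) : K) • ((D.Z ^ a : Rˣ) * u) := by
  obtain ⟨F, hF, rfl⟩ := D.mem_N.1 hu
  rw [mul_assoc, qcomm_zpow (D.w_Z d) a, mul_smul_comm, ← mul_assoc, ← D.Zpow_comm_B0 hF,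
    mul_assoc, zpow_mul]

/-- Every subspace stable under conjugation by `z` is homogeneous for the `x`-degree. -/
lemma homogeneous (hP : Function.Injective fun n : ℤ => P ^ n) (I : Submodule K R)
    (hI : ∀ u ∈ I, ((D.Z⁻¹ : Rˣ) : R) * u * D.Z ∈ I) {u : R} (hu : u ∈ I) :
    ∃ f : ℤ →₀ R, (∀ d, f d ∈ D.N d) ∧ (∀ d, f d ∈ I) ∧ f.sum (fun _ v => v) = u := by
  have hmem : u ∈ ⨆ d, D.N d := by rw [D.iSup_N]; trivial
  obtain ⟨f, hf, hs⟩ := (Submodule.mem_iSup_iff_exists_finsupp _ _).1 hmem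
  refine ⟨f, hf, fun d => ?_, hs⟩
  by_cases hd : d ∈ f.support
  · refine separate (LinearMap.mulRight K (D.Z : R) ∘ₗ LinearMap.mulLeft K ((D.Z⁻¹ : Rˣ) : R)) I
      (fun v hv => by simpa using hI v hv) (fun n => ((P ^ n : Kˣ) : K))
      (fun a b h => hP (Units.ext h)) f.support f (fun d => ?_) ?_ d hd
    · have := D.N_Z (hf d) 1
      simp only [zpow_one, mul_one] at this
      simp [mul_assoc, this]
    · rw [← hs] at hu; exact hu
  · rw [Finsupp.notMem_support_iff.1 hd]; exact I.zero_mem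

/-- A weight vector for conjugation by `z^a` only has components in the expected degrees. -/
lemma weight (hP : Function.Injective fun n : ℤ => P ^ n) {a e : ℤ} {u : R}
    (hu : u * (D.Z ^ a : Rˣ) = ((P ^ e : Kˣ) : K) • ((D.Z ^ a : Rˣ) * u)) :
    ∃ f : ℤ →₀ R, (∀ d, f d ∈ D.N d) ∧ (∀ d, f d ≠ 0 → d * a = e) ∧
      f.sum (fun _ v => v) = u := by
  let I : Submodule K R := LinearMap.ker (LinearMap.mulRight K ((D.Z ^ a : Rˣ) : R) -
    ((P ^ e : Kˣ) : K) • LinearMap.mulLeft K ((D.Z ^ a : Rˣ) : R))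
  have memI : ∀ v, v ∈ I ↔ v * (D.Z ^ a : Rˣ) = ((P ^ e : Kˣ) : K) • ((D.Z ^ a : Rˣ) * v) := by
    intro v; simp [I, sub_eq_zero]
  obtain ⟨f, hf, hfI, hs⟩ := D.homogeneous hP I (fun v hv => by
    rw [memI] at hv ⊢
    have c1 : (D.Z : R) * (D.Z ^ a : Rˣ) = (D.Z ^ a : Rˣ) * D.Z := by
      rw [← Units.val_mul, ← Units.val_mul, mul_self_zpow, ← zpow_add_one, add_comm]
    have c2 : ((D.Z ^ a : Rˣ) : R) * (D.Z⁻¹ : Rˣ) = (D.Z⁻¹ : Rˣ) * (D.Z ^ a : Rˣ) := by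
      rw [← Units.val_mul, ← Units.val_mul, ← zpow_sub_one, ← zpow_neg_one, ← zpow_add,
        neg_add_eq_sub]
    rw [mul_assoc, c1, ← mul_assoc, mul_assoc _ v, hv, mul_smul_comm, smul_mul_assoc]
    simp only [← mul_assoc, c2]) ((memI u).2 hu)
  refine ⟨f, hf, fun d hd => ?_, hs⟩
  have h1 := (memI _).1 (hfI d)
  rw [D.N_Z (hf d) a] at h1
  have h2 : ((D.Z ^ a : Rˣ) : R) * f d ≠ 0 := by simpa using hd
  have h3 := smul_left_injective K h2 h1
  exact hP (Units.ext h3)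

/-! ### Injectivity of the map to the torus, and the units -/

instance : IsDomain (QTorus P Q) := NoZeroDivisors.to_isDomain _

lemma ψ_zpow {v : Rˣ} {e : Ex} (h : D.ψ v = mon P Q e) (hχ : ∀ n : ℤ, chi P Q (n • e) e = 1)
    (n : ℤ) : D.ψ (v ^ n : Rˣ) = mon P Q (n • e) := by
  have hstep : ∀ n : ℤ, D.ψ (v ^ (n + 1) : Rˣ) = D.ψ (v ^ n : Rˣ) * mon P Q e := by
    intro n; rw [zpow_add_one, Units.val_mul, map_mul, h]
  have hmon : ∀ n : ℤ, mon P Q ((n + 1) • e) = mon P Q (n • e) * mon P Q e := by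
    intro n; rw [mon_mul, hχ, Units.val_one, one_smul, add_smul, one_smul]
  induction n using Int.induction_on with
  | zero => simp [torus_one_def]
  | succ n ih => rw [hstep, ih, hmon]
  | pred n ih =>
    apply mul_right_cancel₀ (mon_ne_zero e)
    rw [← hstep, ← hmon, sub_add_cancel, ih]

lemma ψ_m (g : ℤ × ℤ × ℤ) : D.ψ (D.m g) = mon P Q (g, 0) := by
  simp only [m, Units.val_mul, map_mul]
  rw [D.ψ_zpow D.ψZ (by simp [chi]), D.ψ_zpow D.ψS (by simp [chi]), D.ψ_zpow D.ψT (by simp [chi]),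
    mon_mul, smul_mul_assoc, mon_mul]
  simp [chi]

lemma nontrivial (D : Presented P Q R) : Nontrivial R := D.ψ.toRingHom.domain_nontrivial

/-- A homomorphism to the torus that sends the monomials `z^a s^b t^c` to multiples of distinct
monomials, and does not kill `x` or `y`, is injective. -/
lemma injective_of (hP : Function.Injective fun n : ℤ => P ^ n) (θ : R →ₐ[K] QTorus P Q)
    (τ : ℤ × ℤ × ℤ → Ex) (hτ : Function.Injective τ) (c : ℤ × ℤ × ℤ → Kˣ)
    (hθ : ∀ g, θ (D.m g) = (c g : K) • mon P Q (τ g)) (hX : θ D.X ≠ 0) (hY : θ D.Y ≠ 0) :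
    Function.Injective θ := by
  have h0 : ∀ F ∈ D.B0, θ F = 0 → F = 0 := by
    intro F hF hF0
    obtain ⟨l, rfl⟩ := Finsupp.mem_span_range_iff_exists_finsupp.1 hF
    have : l = 0 := by
      ext g
      have h1 := congrArg (coeff (τ g)) hF0
      rw [map_finsuppSum, map_finsuppSum, map_zero, Finsupp.sum, Finset.sum_eq_single g] at h1
      · simpa [hθ, coeff_mon] using h1
      · intro b _ hb
        simp [hθ, coeff_mon, hτ.ne hb]
      · intro hg
        simp [Finsupp.notMem_support_iff.1 hg]
    simp [this]
  have hw : ∀ d, θ (D.w d) ≠ 0 := by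
    intro d
    obtain ⟨n, rfl | rfl⟩ := d.eq_nat_or_neg
    · rw [w_nat, map_pow]; exact pow_ne_zero _ hX
    · rw [w_neg, map_pow]; exact pow_ne_zero _ hY
  refine (injective_iff_map_eq_zero θ).2 fun u hu => ?_
  obtain ⟨f, hf, hfI, hs⟩ := D.homogeneous hP (LinearMap.ker θ.toLinearMap)
    (fun u hu => by
      have : θ u = 0 := hu
      simp [this]) (u := u) hu
  have : f = 0 := by
    ext d
    obtain ⟨F, hF, hFd⟩ := D.mem_N.1 (hf d)
    have h1 : θ (f d) = 0 := hfI d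
    rw [← hFd, map_mul] at h1
    rw [← hFd, h0 F hF ((mul_eq_zero.1 h1).resolve_right (hw d)), zero_mul]
    rfl
  rw [← hs, this, Finsupp.sum_zero_index]

lemma P_sub_one (hP : Function.Injective fun n : ℤ => P ^ n) : (P : K) - 1 ≠ 0 := by
  intro h
  have : (1 : ℤ) = 0 := hP (Units.ext (by simpa [sub_eq_zero] using h))
  omega

lemma mon_z_sub_one_ne : mon P Q ((1, 0, 0), 0) - 1 ≠ 0 := by
  intro h
  have := congrArg (coeff 0) h
  rw [torus_one_def, map_sub, coeff_mon, coeff_mon] at this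
  simp [Prod.ext_iff] at this

lemma ψ_injective (hP : Function.Injective fun n : ℤ => P ^ n) : Function.Injective D.ψ := by
  refine D.injective_of hP D.ψ (fun g => (g, 0)) (fun a b h => (Prod.ext_iff.1 h).1)
    (fun _ => 1) (fun g => by rw [ψ_m, Units.val_one, one_smul]) ?_ ?_
  · rw [ψX]; exact mon_ne_zero _
  · rw [ψY]
    exact smul_ne_zero (inv_ne_zero (P_sub_one hP))
      (mul_ne_zero mon_z_sub_one_ne (mon_ne_zero _))

lemma mem_N_of_weight (hP : Function.Injective fun n : ℤ => P ^ n) {a e d : ℤ} (ha : a ≠ 0)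
    (hd : d * a = e) {u : R}
    (hu : u * (D.Z ^ a : Rˣ) = ((P ^ e : Kˣ) : K) • ((D.Z ^ a : Rˣ) * u)) : u ∈ D.N d := by
  obtain ⟨f, hf, hfe, rfl⟩ := D.weight hP hu
  refine Submodule.sum_mem _ fun i hi => ?_
  have h1 := hfe i (Finsupp.mem_support_iff.1 hi)
  have : i = d := mul_right_cancel₀ ha (h1.trans hd.symm)
  exact this ▸ hf i

/-- The image of an element of negative `x`-degree is left divisible by `z - 1`, which a monomial is
not: setting `z = 1` does not kill it. So a monomial in the image of `R` has degree `≥ 0`. -/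
lemma nonneg_deg (hP : Function.Injective fun n : ℤ => P ^ n) {v : R} {k : K} (hk : k ≠ 0)
    {g : Ex} (h : D.ψ v = k • mon P Q g) : 0 ≤ g.2 := by
  by_contra! hneg
  have hv : v ∈ D.N g.2 := by
    refine D.mem_N_of_weight hP (a := 1) one_ne_zero (mul_one _) (D.ψ_injective hP ?_)
    rw [zpow_one, map_mul, map_smul, map_mul, h, D.ψZ, smul_mul_assoc, mul_smul_comm, mon_mul,
      mon_mul, add_comm g]
    simp [chi, smul_smul, mul_comm]
  obtain ⟨F, hF, rfl⟩ := D.mem_N.1 hv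
  obtain ⟨n, hn⟩ : ∃ n : ℕ, g.2 = -((n + 1 : ℕ) : ℤ) := ⟨(-g.2 - 1).toNat, by omega⟩
  have hFz := congrArg D.ψ (D.Z_comm_B0 hF)
  rw [map_mul, map_mul, D.ψZ] at hFz
  have h1 : D.ψ F * (mon P Q ((1, 0, 0), 0) - 1) = (mon P Q ((1, 0, 0), 0) - 1) * D.ψ F := by
    rw [mul_sub, sub_mul, hFz, mul_one, one_mul]
  have h2 : D.ψ (F * D.w g.2) = (mon P Q ((1, 0, 0), 0) - 1) *
      (((P : K) - 1)⁻¹ • (D.ψ F * mon P Q ((0, 0, 0), -1) * D.ψ D.Y ^ n)) := by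
    rw [hn, w_neg, pow_succ', map_mul, map_mul, map_pow]
    nth_rewrite 1 [D.ψY]
    rw [smul_mul_assoc, mul_smul_comm, mul_smul_comm]
    congr 1
    simp only [← mul_assoc, h1]
  have h3 := congrArg (evz 1) (h2.symm.trans h)
  rw [sub_mul, one_mul, map_sub, evz_mul, Units.val_one, one_mul, sub_self, map_smul,
    evz_mon] at h3
  simp at h3
  exact hk h3.symm

/-- The unit `v` is a nonzero multiple of the monomial of exponent `g`. -/
def IsMon (v : Rˣ) (g : ℤ × ℤ × ℤ) : Prop := ∃ k : Kˣ, (v : R) = (k : K) • (D.m g : R)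

lemma isMon_m (g : ℤ × ℤ × ℤ) : D.IsMon (D.m g) g := ⟨1, by simp⟩

/-- All units of `R` are multiples of monomials in `z, s, t`. -/
lemma isMon_of_unit (hP : Function.Injective fun n : ℤ => P ^ n) (v : Rˣ) :
    ∃ g, D.IsMon v g := by
  have h1 : D.ψ v * D.ψ (v⁻¹ : Rˣ) = 1 := by rw [← map_mul, Units.mul_inv, map_one]
  obtain ⟨c, d, g, hc, hd, e1, e2⟩ := torus_unit h1
  have n1 := D.nonneg_deg hP hc e1
  have n2 := D.nonneg_deg hP hd e2
  rw [Prod.snd_neg] at n2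
  have hg : g.2 = 0 := by omega
  refine ⟨g.1, Units.mk0 c hc, D.ψ_injective hP ?_⟩
  rw [map_smul, ψ_m, e1, Units.val_mk0, ← hg]

lemma IsMon.mul {D : Presented P Q R} {u v : Rˣ} {g h : ℤ × ℤ × ℤ} (hu : D.IsMon u g)
    (hv : D.IsMon v h) : D.IsMon (u * v) (g + h) := by
  obtain ⟨a, ha⟩ := hu
  obtain ⟨b, hb⟩ := hv
  refine ⟨a * b * Q ^ (-(g.2.2 * h.2.1)), ?_⟩
  rw [Units.val_mul, ha, hb, smul_mul_smul_comm, m_mul, smul_smul]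
  simp

lemma IsMon.inv {D : Presented P Q R} {u : Rˣ} {g : ℤ × ℤ × ℤ} (hu : D.IsMon u g) :
    D.IsMon u⁻¹ (-g) := by
  obtain ⟨k, hk⟩ := hu.mul (D.isMon_m (-g))
  refine ⟨k⁻¹, ?_⟩
  rw [add_neg_cancel, m_zero, Units.val_one, Units.val_mul] at hk
  rw [← (Units.inv_mul_eq_iff_eq_mul u).2 hk.symm]
  simp [smul_smul]

lemma IsMon.zpow {D : Presented P Q R} {u : Rˣ} {g : ℤ × ℤ × ℤ} (hu : D.IsMon u g) (n : ℤ) :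
    D.IsMon (u ^ n) (n • g) := by
  induction n using Int.induction_on with
  | zero => simpa [m_zero] using D.isMon_m 0
  | succ n ih => rw [zpow_add_one, add_smul, one_smul]; exact ih.mul hu
  | pred n ih => rw [zpow_sub_one, sub_smul, one_smul, sub_eq_add_neg]; exact ih.mul hu.inv

lemma noZeroDivisors (D : Presented P Q R) (hP : Function.Injective fun n : ℤ => P ^ n) :
    NoZeroDivisors R :=
  (D.ψ_injective hP).noZeroDivisors D.ψ (map_zero _) (map_mul _)

/-- If two monomials satisfy `u v = Q^e v u`, then `e` is the determinant of their exponents in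
`s` and `t`. -/
lemma exponent_relation (hQ : Function.Injective fun n : ℤ => Q ^ n) {u v : Rˣ}
    {g h : ℤ × ℤ × ℤ} (hu : D.IsMon u g) (hv : D.IsMon v h) {e : ℤ}
    (huv : (u * v : R) = ((Q ^ e : Kˣ) : K) • (v * u : R)) :
    g.2.1 * h.2.2 - g.2.2 * h.2.1 = e := by
  have := D.nontrivial
  obtain ⟨a, ha⟩ := hu
  obtain ⟨b, hb⟩ := hv
  rw [ha, hb, smul_mul_smul_comm, smul_mul_smul_comm, m_mul, m_mul, add_comm h g, smul_smul,
    smul_smul, smul_smul] at huv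
  have h1 := smul_left_injective K (Units.ne_zero (D.m (g + h))) huv
  have h2 : a * b * Q ^ (-(g.2.2 * h.2.1)) = Q ^ e * (b * a * Q ^ (-(h.2.2 * g.2.1))) := by
    ext
    simp only [Units.val_mul]
    rw [h1]; ring
  have h3 : Q ^ (-(g.2.2 * h.2.1)) = Q ^ (e + -(h.2.2 * g.2.1)) := by
    rw [zpow_add]
    apply mul_left_cancel (a := a * b)
    rw [h2, mul_comm b a]
    exact mul_left_comm _ _ _
  have h4 := hQ h3
  linear_combination h4

/-! ### Endomorphisms -/

lemma w_one : D.w 1 = D.X := pow_one _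

lemma w_neg_one : D.w (-1) = D.Y := pow_one _

lemma isUnit_of_triple [NoZeroDivisors R] {F G v : R} (h : G * F * v = 1) :
    IsUnit G ∧ IsUnit F := by
  have h1 : G * (F * v) = 1 := by rw [← mul_assoc, h]
  have h2 := mul_eq_one_symm h1
  have h3 : F * (v * G) = 1 := by rw [← mul_assoc, h2]
  exact ⟨⟨⟨G, F * v, h1, h2⟩, rfl⟩, ⟨⟨F, v * G, h3, mul_eq_one_symm h3⟩, rfl⟩⟩

lemma lin_Z_ne (c : K) : c • (D.Z : R) - 1 ≠ 0 := by
  intro h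
  have h1 := congrArg (fun u => coeff 0 (D.ψ u)) h
  simp only [map_sub, map_smul, map_one, D.ψZ, map_zero, torus_one_def, coeff_mon] at h1
  simp [Prod.ext_iff] at h1

/-- An endomorphism does not kill `x` or `y`, as otherwise the image of `z` would be both `1` and
`P⁻¹`. -/
lemma map_ne_zero (hP : Function.Injective fun n : ℤ => P ^ n) (φ : R →ₐ[K] R) :
    φ D.X ≠ 0 ∧ φ D.Y ≠ 0 := by
  have hP1 := P_sub_one hP
  have := D.nontrivial
  have key : ¬ (φ D.X * φ D.Y = 0 ∧ φ D.Y * φ D.X = 0) := by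
    rintro ⟨h1, h2⟩
    rw [← map_mul, D.xy, map_smul, smul_eq_zero_iff_right (inv_ne_zero hP1), map_sub, map_smul,
      map_one, sub_eq_zero] at h1
    rw [← map_mul, D.yx, map_smul, smul_eq_zero_iff_right (inv_ne_zero hP1), map_sub,
      map_one, sub_eq_zero] at h2
    rw [h2] at h1
    apply hP1
    have h3 : ((P : K) - 1) • (1 : R) = 0 := by rw [sub_smul, h1, one_smul, sub_self]
    exact (smul_eq_zero.1 h3).resolve_right one_ne_zero
  constructor <;> intro h <;> exact key (by simp [h])

/-- If `φ z = α z`, then `φ x` and `φ y` are `x` and `y` up to units. -/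
lemma shape_pos (hP : Function.Injective fun n : ℤ => P ^ n) (φ : R →ₐ[K] R) {α : K}
    (hZ : φ D.Z = α • (D.Z : R)) (hX : φ D.X ∈ D.N 1) (hY : φ D.Y ∈ D.N (-1)) :
    ∃ F G : R, IsUnit F ∧ IsUnit G ∧ φ D.X = D.X * F ∧ φ D.Y = G * D.Y := by
  have hP1 := P_sub_one hP
  have := D.noZeroDivisors hP
  have := D.nontrivial
  obtain ⟨F₀, hF₀, eX⟩ := D.mem_N.1 hX
  obtain ⟨F, hF, eF⟩ := D.B0_w 1 hF₀
  obtain ⟨G, hG, eY⟩ := D.mem_N.1 hY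
  rw [eF, w_one] at eX
  rw [w_neg_one] at eY
  have h1 : ((D.Z : R) - 1) * (G * F) = α • (D.Z : R) - 1 := by
    have h2 := congrArg φ D.yx
    rw [map_mul, ← eX, ← eY, map_smul, map_sub, map_one, hZ, mul_assoc, ← mul_assoc D.Y, D.yx,
      smul_mul_assoc, mul_smul_comm] at h2
    have h3 := smul_right_injective R (inv_ne_zero hP1) h2
    rw [← h3, sub_mul, sub_mul, mul_sub, one_mul, one_mul, ← mul_assoc, D.Z_comm_B0 hG, mul_assoc]
  have hα : α = 1 := by
    -- both sides vanish at `z = 1`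
    have h2 := congrArg (fun u => evz 1 (D.ψ u)) h1
    simp only [map_mul, map_sub, map_smul, map_one, D.ψZ, sub_mul, one_mul, evz_mul,
      torus_one_def, evz_mon] at h2
    have h3 : 0 = α - 1 := by simpa using h2
    exact sub_eq_zero.1 h3.symm
  subst hα
  have h4 : G * F = 1 := by
    rw [one_smul] at h1
    refine mul_left_cancel₀ ?_ (h1.trans (mul_one _).symm)
    simpa using D.lin_Z_ne 1
  obtain ⟨u1, u2⟩ := isUnit_of_triple (G := G) (F := F) (v := (1 : R)) (by rw [mul_one]; exact h4)
  exact ⟨F, G, u2, u1, eX.symm, eY.symm⟩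

/-- If `φ z = α z⁻¹`, then `φ` exchanges `x` and `y` up to units. -/
lemma shape_neg (hP : Function.Injective fun n : ℤ => P ^ n) (φ : R →ₐ[K] R) {α : K}
    (hZ : φ D.Z = α • ((D.Z⁻¹ : Rˣ) : R)) (hX : φ D.X ∈ D.N (-1)) (hY : φ D.Y ∈ D.N 1) :
    ∃ F G : R, IsUnit F ∧ IsUnit G ∧ φ D.X = D.Y * F ∧ φ D.Y = G * D.X := by
  have hP1 := P_sub_one hP
  have := D.noZeroDivisors hP
  have := D.nontrivial
  obtain ⟨F₀, hF₀, eX⟩ := D.mem_N.1 hX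
  obtain ⟨F, hF, eF⟩ := D.B0_w (-1) hF₀
  obtain ⟨G, hG, eY⟩ := D.mem_N.1 hY
  rw [eF, w_neg_one] at eX
  rw [w_one] at eY
  have h1 : ((P : K) • (D.Z : R) - 1) * (G * F) = α • ((D.Z⁻¹ : Rˣ) : R) - 1 := by
    have h2 := congrArg φ D.yx
    rw [map_mul, ← eX, ← eY, map_smul, map_sub, map_one, hZ, mul_assoc, ← mul_assoc D.X, D.xy,
      smul_mul_assoc, mul_smul_comm] at h2
    have h3 := smul_right_injective R (inv_ne_zero hP1) h2
    rw [← h3, sub_mul, sub_mul, mul_sub, one_mul, one_mul, smul_mul_assoc, smul_mul_assoc,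
      mul_smul_comm, ← mul_assoc, D.Z_comm_B0 hG, mul_assoc]
  have hα : α = ((P⁻¹ : Kˣ) : K) := by
    -- both sides vanish at `z = P⁻¹`
    have hz : D.ψ ((D.Z⁻¹ : Rˣ) : R) = mon P Q ((-1, 0, 0), 0) := by
      simpa [m] using D.ψ_m (-1, 0, 0)
    have h2 := congrArg (fun u => evz P⁻¹ (D.ψ u)) h1
    simp only [map_mul, map_sub, map_smul, map_one, D.ψZ, sub_mul, one_mul, smul_mul_assoc,
      evz_mul, hz, torus_one_def, evz_mon, smul_eq_mul] at h2
    rw [← mul_assoc, Units.mul_inv, one_mul, sub_self] at h2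
    have h3 : 0 = α * P - 1 := by simpa using h2
    have h4 : (P : K) * α = 1 := by linear_combination -h3
    exact Units.eq_inv_of_mul_eq_one_left h4
  have h4 : G * F * D.Z = -α • (1 : R) := by
    refine mul_left_cancel₀ (D.lin_Z_ne P) ?_
    rw [← mul_assoc, h1, sub_mul, smul_mul_assoc, Units.inv_mul, one_mul, neg_smul, mul_neg,
      mul_smul_comm, mul_one, smul_sub, smul_smul, hα, Units.inv_mul, one_smul, neg_sub]
  obtain ⟨u1, u2⟩ := isUnit_of_triple (G := G) (F := F) (v := (-(P : K)) • (D.Z : R)) (by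
    rw [mul_smul_comm, h4, smul_smul, hα, neg_mul_neg, Units.mul_inv, one_smul])
  exact ⟨F, G, u2, u1, eX.symm, eY.symm⟩

/-- Every algebra endomorphism is bijective when `P` and `Q` have infinite order. -/
theorem bijective (D : Presented P Q R) (hP : Function.Injective fun n : ℤ => P ^ n)
    (hQ : Function.Injective fun n : ℤ => Q ^ n) (φ : R →ₐ[K] R) : Function.Bijective φ := by
  have := D.nontrivial
  have := D.noZeroDivisors hP
  let U : Rˣ →* Rˣ := Units.map (φ : R →* R)
  have hU : ∀ u : Rˣ, ((U u : Rˣ) : R) = φ u := fun _ => rfl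
  obtain ⟨⟨a, b₁, c₁⟩, h₁⟩ := D.isMon_of_unit hP (U D.Z)
  obtain ⟨⟨a₂, b₂, c₂⟩, h₂⟩ := D.isMon_of_unit hP (U D.S)
  obtain ⟨⟨a₃, b₃, c₃⟩, h₃⟩ := D.isMon_of_unit hP (U D.T)
  have r₁₂ := D.exponent_relation hQ (e := 0) h₁ h₂ (by
    rw [zpow_zero, Units.val_one, one_smul, ← Units.val_mul, ← Units.val_mul, ← map_mul, D.sz,
      map_mul])
  have r₁₃ := D.exponent_relation hQ (e := 0) h₁ h₃ (by
    rw [zpow_zero, Units.val_one, one_smul, ← Units.val_mul, ← Units.val_mul, ← map_mul, D.tz,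
      map_mul])
  have r₂₃ := D.exponent_relation hQ (e := 1) h₂ h₃ (by
    rw [zpow_one, hU, hU, ← map_mul, D.st, map_smul, map_mul])
  simp only at r₁₂ r₁₃ r₂₃
  -- the exponent vectors of `φ s` and `φ t` have determinant `1`
  have hb : b₁ = 0 := by linear_combination (-b₁) * r₂₃ + b₂ * r₁₃ - b₃ * r₁₂
  have hc : c₁ = 0 := by linear_combination (-c₁) * r₂₃ + c₂ * r₁₃ - c₃ * r₁₂
  subst hb hc
  have hZa : D.m (a, 0, 0) = D.Z ^ a := by simp [m]
  obtain ⟨α, hα⟩ := id h₁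
  rw [hZa, hU] at hα
  have hα0 : (α : K) ≠ 0 := α.ne_zero
  obtain ⟨hX0, hY0⟩ := D.map_ne_zero hP φ
  have wX : φ D.X * (D.Z ^ a : Rˣ) = ((P ^ (1 : ℤ) : Kˣ) : K) • ((D.Z ^ a : Rˣ) * φ D.X) := by
    have h := congrArg φ D.xz
    rw [map_mul, map_smul, map_mul, hα, mul_smul_comm, smul_mul_assoc, smul_comm] at h
    simpa using smul_right_injective R hα0 h
  have wY : φ D.Y * (D.Z ^ a : Rˣ) = ((P ^ (-1 : ℤ) : Kˣ) : K) • ((D.Z ^ a : Rˣ) * φ D.Y) := by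
    have h := congrArg φ D.yz
    rw [map_mul, map_smul, map_mul, hα, mul_smul_comm, smul_mul_assoc, smul_comm] at h
    rw [zpow_neg_one]
    exact smul_right_injective R hα0 h
  have ha : a = 1 ∨ a = -1 := by
    obtain ⟨f, -, hfe, hfs⟩ := D.weight hP wX
    by_cases hf : f = 0
    · rw [hf, Finsupp.sum_zero_index] at hfs
      exact absurd hfs.symm hX0
    · obtain ⟨d, hd⟩ := Finsupp.ne_iff.1 hf
      have := hfe d hd
      rw [mul_comm] at this
      exact Int.eq_one_or_neg_one_of_mul_eq_one this
  have haa : a * a = 1 := by rcases ha with rfl | rfl <;> norm_num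
  have shape : ∃ F G : R, IsUnit F ∧ IsUnit G ∧
      ((φ D.X = D.X * F ∧ φ D.Y = G * D.Y) ∨ (φ D.X = D.Y * F ∧ φ D.Y = G * D.X)) := by
    rcases ha with rfl | rfl
    · obtain ⟨F, G, hF, hG, h⟩ := D.shape_pos hP φ (α := α) (by rw [hα, zpow_one])
        (D.mem_N_of_weight hP one_ne_zero (by norm_num) wX)
        (D.mem_N_of_weight hP one_ne_zero (by norm_num) wY)
      exact ⟨F, G, hF, hG, Or.inl h⟩
    · obtain ⟨F, G, hF, hG, h⟩ := D.shape_neg hP φ (α := α) (by rw [hα, zpow_neg_one])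
        (D.mem_N_of_weight hP (by norm_num) (by norm_num) wX)
        (D.mem_N_of_weight hP (by norm_num) (by norm_num) wY)
      exact ⟨F, G, hF, hG, Or.inr h⟩
  constructor
  -- injectivity: monomials go to monomials along an invertible integer matrix
  · let τ : ℤ × ℤ × ℤ → ℤ × ℤ × ℤ := fun g => g.1 • (a, (0 : ℤ), (0 : ℤ)) + g.2.1 • (a₂, b₂, c₂) +
      g.2.2 • (a₃, b₃, c₃)
    have hτ : Function.Injective τ := by
      rintro ⟨i, j, k⟩ ⟨i', j', k'⟩ h
      simp only [τ, Prod.ext_iff, Prod.fst_add, Prod.snd_add, Prod.smul_fst, Prod.smul_snd,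
        smul_eq_mul] at h
      obtain ⟨e1, e2, e3⟩ := h
      have hj : j = j' := by
        linear_combination c₃ * e2 - b₃ * e3 - (j - j') * r₂₃
      have hk : k = k' := by
        linear_combination b₂ * e3 - c₂ * e2 - (k - k') * r₂₃
      subst hj hk
      have hi : i = i' := by
        linear_combination a * e1 - (i - i') * haa
      rw [hi]
    have hm : ∀ g, D.IsMon (U (D.m g)) (τ g) := by
      intro g
      simp only [m, map_mul, map_zpow]
      exact ((h₁.zpow _).mul (h₂.zpow _)).mul (h₃.zpow _)
    choose c hc using hm
    have hψ := D.ψ_injective hP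
    have : Function.Injective (D.ψ.comp φ) := by
      refine D.injective_of hP (D.ψ.comp φ) (fun g => (τ g, 0))
        (fun g h e => hτ (Prod.ext_iff.1 e).1) c (fun g => ?_) ?_ ?_
      · rw [AlgHom.comp_apply, ← hU, hc, map_smul, ψ_m]
      · rw [AlgHom.comp_apply]; exact (map_ne_zero_iff _ hψ).2 hX0
      · rw [AlgHom.comp_apply]; exact (map_ne_zero_iff _ hψ).2 hY0
    exact Function.Injective.of_comp (f := D.ψ) this
  -- surjectivity: the exponents of monomials in the range form a subgroup
  · let L : AddSubgroup (ℤ × ℤ × ℤ) :=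
      { carrier := {g | ∃ u : Rˣ, D.IsMon (U u) g}
        zero_mem' := ⟨1, by simpa [m_zero] using D.isMon_m 0⟩
        add_mem' := by
          rintro g h ⟨u, hu⟩ ⟨v, hv⟩
          exact ⟨u * v, by rw [map_mul]; exact hu.mul hv⟩
        neg_mem' := by
          rintro g ⟨u, hu⟩
          exact ⟨u⁻¹, by rw [map_inv]; exact hu.inv⟩ }
    have l₁ : (a, (0 : ℤ), (0 : ℤ)) ∈ L := ⟨_, h₁⟩
    have l₂ : (a₂, b₂, c₂) ∈ L := ⟨_, h₂⟩
    have l₃ : (a₃, b₃, c₃) ∈ L := ⟨_, h₃⟩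
    have hL : ∀ g, g ∈ L := by
      rintro ⟨i, j, k⟩
      have e : ((i, j, k) : ℤ × ℤ × ℤ) =
          (a * (i - (j * c₃ - k * b₃) * a₂ - (k * b₂ - j * c₂) * a₃)) • (a, (0 : ℤ), (0 : ℤ)) +
          (j * c₃ - k * b₃) • (a₂, b₂, c₂) + (k * b₂ - j * c₂) • (a₃, b₃, c₃) := by
        simp only [Prod.ext_iff, Prod.fst_add, Prod.snd_add, Prod.smul_fst, Prod.smul_snd,
          smul_eq_mul]
        refine ⟨?_, ?_, ?_⟩
        · linear_combination (-(i - (j * c₃ - k * b₃) * a₂ - (k * b₂ - j * c₂) * a₃)) * haa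
        · linear_combination (-j) * r₂₃
        · linear_combination (-k) * r₂₃
      rw [e]
      exact L.add_mem (L.add_mem (L.zsmul_mem l₁ _) (L.zsmul_mem l₂ _)) (L.zsmul_mem l₃ _)
    have hm : ∀ g, (D.m g : R) ∈ φ.range := by
      intro g
      obtain ⟨u, k, hk⟩ := hL g
      refine ⟨((k⁻¹ : Kˣ) : K) • (u : R), ?_⟩
      change φ _ = _
      rw [map_smul, ← hU, hk, smul_smul, Units.inv_mul, one_smul]
    have hunit : ∀ u : Rˣ, (u : R) ∈ φ.range := by
      intro u
      obtain ⟨g, k, hk⟩ := D.isMon_of_unit hP u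
      rw [hk]
      exact φ.range.smul_mem (hm g) _
    have hXr : φ D.X ∈ φ.range := ⟨_, rfl⟩
    have hYr : φ D.Y ∈ φ.range := ⟨_, rfl⟩
    have hXY : D.X ∈ φ.range ∧ D.Y ∈ φ.range := by
      obtain ⟨_, _, ⟨F, rfl⟩, ⟨G, rfl⟩, h⟩ := shape
      rcases h with ⟨e1, e2⟩ | ⟨e1, e2⟩
      · have i1 := φ.range.mul_mem hXr (hunit F⁻¹)
        have i2 := φ.range.mul_mem (hunit G⁻¹) hYr
        rw [e1, Units.mul_inv_cancel_right] at i1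
        rw [e2, Units.inv_mul_cancel_left] at i2
        exact ⟨i1, i2⟩
      · have i1 := φ.range.mul_mem hXr (hunit F⁻¹)
        have i2 := φ.range.mul_mem (hunit G⁻¹) hYr
        rw [e1, Units.mul_inv_cancel_right] at i1
        rw [e2, Units.inv_mul_cancel_left] at i2
        exact ⟨i2, i1⟩
    have htop : Subalgebra.toSubmodule φ.range = ⊤ :=
      D.gen _ φ.range.one_mem (fun u hu => φ.range.mul_mem hu hXY.1)
        (fun u hu => φ.range.mul_mem hu hXY.2) (fun u hu n => φ.range.mul_mem hu (hunit _))
        (fun u hu n => φ.range.mul_mem hu (hunit _)) (fun u hu n => φ.range.mul_mem hu (hunit _))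
    intro u
    have hu : u ∈ Subalgebra.toSubmodule φ.range := by rw [htop]; trivial
    exact hu

end Presented

/-! ### The localization `A_S` -/

section Relations

variable {K : Type*} [Field K] {R : Type*} [Ring R] [Algebra K R] {p : K} {x y z : R}

lemma rel_yx (hz : z = x * y - y * x) (h : x * y - p • (y * x) = 1) (hp : p - 1 ≠ 0) :
    y * x = (p - 1)⁻¹ • (z - 1) := by
  rw [eq_inv_smul_iff₀ hp, hz, ← h, sub_smul, one_smul]
  abel

lemma rel_xy (hz : z = x * y - y * x) (h : x * y - p • (y * x) = 1) (hp : p - 1 ≠ 0) :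
    x * y = (p - 1)⁻¹ • (p • z - 1) := by
  rw [eq_inv_smul_iff₀ hp, hz, ← h, sub_smul, one_smul, smul_sub]
  abel

lemma rel_xz (hz : z = x * y - y * x) (h : x * y - p • (y * x) = 1) :
    x * z = p • (z * x) := by
  have h1 : x * y = 1 + p • (y * x) := by rw [← h]; abel
  have h2 : z = 1 + (p - 1) • (y * x) := by rw [hz, h1, sub_smul, one_smul]; abel
  have h3 : x * (y * x) = x + p • (y * x * x) := by
    rw [← mul_assoc, h1, add_mul, one_mul, smul_mul_assoc]
  rw [h2, mul_add, mul_one, mul_smul_comm, h3, add_mul, one_mul, smul_mul_assoc]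
  module

lemma rel_zy (hz : z = x * y - y * x) (h : x * y - p • (y * x) = 1) :
    z * y = p • (y * z) := by
  have h1 : x * y = 1 + p • (y * x) := by rw [← h]; abel
  have h2 : z = 1 + (p - 1) • (y * x) := by rw [hz, h1, sub_smul, one_smul]; abel
  have h3 : y * x * y = y + p • (y * (y * x)) := by
    rw [mul_assoc, h1, mul_add, mul_one, mul_smul_comm]
  rw [h2, mul_add, mul_one, mul_smul_comm, add_mul, one_mul, smul_mul_assoc, h3]
  module

lemma comm_z {v : R} (hx : v * x = x * v) (hy : v * y = y * v) :
    (x * y - y * x) * v = v * (x * y - y * x) := by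
  have hx' : Commute v x := hx
  have hy' : Commute v y := hy
  exact ((hx'.mul_right hy').sub_right (hy'.mul_right hx')).eq.symm

end Relations

section Instance

variable {K : Type*} [Field K] {P Q : Kˣ}

lemma mon_isUnit (g : Ex) : IsUnit (mon P Q g) := by
  have h : ∀ g : Ex, mon P Q g * (((chi P Q g (-g))⁻¹ : Kˣ) : K) • mon P Q (-g) = 1 := by
    intro g
    rw [mul_smul_comm, mon_mul, smul_smul, Units.inv_mul, one_smul, add_neg_cancel, torus_one_def]
  exact ⟨⟨_, _, h g, mul_eq_one_symm (h g)⟩, rfl⟩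

/-- The images in the quantum torus of the generators `x, y, s, t`. -/
def genImage (P Q : Kˣ) : Fin 4 → QTorus P Q :=
  ![mon P Q ((0, 0, 0), 1),
    ((P : K) - 1)⁻¹ • ((mon P Q ((1, 0, 0), 0) - 1) * mon P Q ((0, 0, 0), -1)),
    mon P Q ((0, 1, 0), 0), mon P Q ((0, 0, 1), 0)]

lemma image_xy : genImage P Q 0 * genImage P Q 1 =
    ((P : K) - 1)⁻¹ • ((P : K) • mon P Q ((1, 0, 0), 0) - 1) := by
  simp [genImage, mon_mul, chi, torus_one_def, sub_mul, mul_sub]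
  rfl

lemma image_yx : genImage P Q 1 * genImage P Q 0 =
    ((P : K) - 1)⁻¹ • (mon P Q ((1, 0, 0), 0) - 1) := by
  simp [genImage, mon_mul, chi, torus_one_def, sub_mul]
  rfl

/-- The map from `A` to the quantum torus. -/
def toTorus (hP : (P : K) - 1 ≠ 0) : ExtWeyl K (P : K) (Q : K) 1 1 →ₐ[K] QTorus P Q :=
  RingQuot.liftAlgHom K ⟨FreeAlgebra.lift K (genImage P Q), by
    intro a b h
    induction h with
    | weyl =>
      simp only [map_sub, map_smul, map_mul, map_one, FreeAlgebra.lift_ι_apply]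
      rw [image_xy, image_yx, smul_comm, ← smul_sub, inv_smul_eq_iff₀ hP, sub_smul, one_smul,
        smul_sub]
      abel
    | st =>
      simp only [map_smul, map_mul, FreeAlgebra.lift_ι_apply]
      simp [genImage, mon_mul, chi, smul_smul]
    | sx =>
      simp only [map_smul, map_mul, FreeAlgebra.lift_ι_apply]
      simp [genImage, mon_mul, chi]
    | sy =>
      simp only [map_smul, map_mul, FreeAlgebra.lift_ι_apply]
      simp [genImage, mon_mul, chi, smul_smul, sub_mul, mul_sub]
    | tx =>
      simp only [map_smul, map_mul, FreeAlgebra.lift_ι_apply]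
      simp [genImage, mon_mul, chi]
    | ty =>
      simp only [map_smul, map_mul, FreeAlgebra.lift_ι_apply]
      simp [genImage, mon_mul, chi, smul_smul, sub_mul, mul_sub]⟩

lemma toTorus_ι (hP : (P : K) - 1 ≠ 0) (i : Fin 4) :
    toTorus (Q := Q) hP (RingQuot.mkAlgHom K _ (FreeAlgebra.ι K i)) = genImage P Q i := by
  rw [toTorus, RingQuot.liftAlgHom_mkAlgHom_apply, FreeAlgebra.lift_ι_apply]

lemma toTorus_z (hP : (P : K) - 1 ≠ 0) :
    toTorus (Q := Q) hP (wz K P Q) = mon P Q ((1, 0, 0), 0) := by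
  rw [wz, wx, wy, map_sub, map_mul, map_mul, toTorus_ι, toTorus_ι, image_xy, image_yx,
    ← smul_sub, inv_smul_eq_iff₀ hP, sub_smul, one_smul]
  abel

lemma toTorus_isUnit (hP : (P : K) - 1 ≠ 0) {a : ExtWeyl K (P : K) (Q : K) 1 1}
    (ha : a ∈ locS K (P : K) (Q : K)) : IsUnit (toTorus hP a) := by
  induction ha using Submonoid.closure_induction with
  | mem a ha =>
    rcases ha with rfl | rfl | rfl
    · rw [toTorus_z]; exact mon_isUnit _
    · rw [ws, toTorus_ι]; exact mon_isUnit _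
    · rw [wt, toTorus_ι]; exact mon_isUnit _
  | one => rw [map_one]; exact isUnit_one
  | mul a b _ _ ha hb => rw [map_mul]; exact ha.mul hb

/-- The map from `S` to the units of the quantum torus. -/
def torusUnits (hP : (P : K) - 1 ≠ 0) : locS K (P : K) (Q : K) →* (QTorus P Q)ˣ where
  toFun a := (toTorus_isUnit hP a.2).unit
  map_one' := Units.ext (map_one (toTorus hP))
  map_mul' a b := Units.ext (map_mul (toTorus hP) a.1 b.1)

variable [OreLocalization.OreSet (locS K (P : K) (Q : K))]

/-- The numerator map `A → A_S` as an algebra homomorphism. -/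
def num : ExtWeyl K (P : K) (Q : K) 1 1 →ₐ[K] ALoc K (P : K) (Q : K) :=
  { OreLocalization.numeratorRingHom with commutes' := fun _ => rfl }

/-- The map from `A_S` to the quantum torus. -/
def locToTorus (hP : (P : K) - 1 ≠ 0) : ALoc K (P : K) (Q : K) →ₐ[K] QTorus P Q :=
  { OreLocalization.universalHom (toTorus (Q := Q) hP).toRingHom
      (torusUnits hP) (fun a => (toTorus_isUnit hP a.2).unit_spec.symm) with
    commutes' := fun c => by
      refine (OreLocalization.universalHom_commutes _ _ _).trans ?_
      exact (toTorus (Q := Q) hP).commutes c }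

lemma locToTorus_num (hP : (P : K) - 1 ≠ 0) (a : ExtWeyl K (P : K) (Q : K) 1 1) :
    locToTorus hP (num a) = toTorus hP a :=
  OreLocalization.universalHom_commutes _ _ _

/-- A subspace of `A_S` that contains `1` and is stable under right multiplication by `x`, `y` and
the powers of `z, s, t` is everything: every element is `s⁻¹ r`. -/
lemma loc_gen (M : Submodule K (ALoc K (P : K) (Q : K))) (h1 : 1 ∈ M)
    (hx : ∀ u ∈ M, u * lx K (P : K) (Q : K) ∈ M) (hy : ∀ u ∈ M, u * ly K (P : K) (Q : K) ∈ M)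
    (hz : ∀ u ∈ M, ∀ n : ℤ, u * (uz K (P : K) (Q : K) ^ n : (ALoc K (P : K) (Q : K))ˣ) ∈ M)
    (hs : ∀ u ∈ M, ∀ n : ℤ, u * (us K (P : K) (Q : K) ^ n : (ALoc K (P : K) (Q : K))ˣ) ∈ M)
    (ht : ∀ u ∈ M, ∀ n : ℤ, u * (ut K (P : K) (Q : K) ^ n : (ALoc K (P : K) (Q : K))ˣ) ∈ M) :
    M = ⊤ := by
  have hnum : ∀ a : ExtWeyl K (P : K) (Q : K) 1 1, ∀ u ∈ M, u * num a ∈ M := by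
    intro a
    obtain ⟨a, rfl⟩ := RingQuot.mkAlgHom_surjective K _ a
    induction a using FreeAlgebra.induction with
    | grade0 c =>
      intro u hu
      rw [AlgHom.commutes, AlgHom.commutes, ← Algebra.commutes, ← Algebra.smul_def]
      exact M.smul_mem _ hu
    | grade1 i =>
      fin_cases i
      · exact hx
      · exact hy
      · intro u hu
        have := hs u hu 1
        rw [zpow_one] at this
        exact this
      · intro u hu
        have := ht u hu 1
        rw [zpow_one] at this
        exact this
    | mul a b ha hb =>
      intro u hu
      rw [map_mul, map_mul, ← mul_assoc]
      exact hb _ (ha _ hu)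
    | add a b ha hb =>
      intro u hu
      rw [map_add, map_add, mul_add]
      exact M.add_mem (ha _ hu) (hb _ hu)
  have hinv : ∀ a (ha : a ∈ locS K (P : K) (Q : K)), ∀ u ∈ M,
      u * ((OreLocalization.numeratorUnit ⟨a, ha⟩ : (ALoc K (P : K) (Q : K))ˣ)⁻¹ :
        (ALoc K (P : K) (Q : K))ˣ) ∈ M := by
    intro a ha
    induction ha using Submonoid.closure_induction with
    | mem a ha =>
      intro u hu
      rcases ha with rfl | rfl | rfl
      · have := hz u hu (-1)
        rw [zpow_neg_one] at this
        exact this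
      · have := hs u hu (-1)
        rw [zpow_neg_one] at this
        exact this
      · have := ht u hu (-1)
        rw [zpow_neg_one] at this
        exact this
    | one =>
      intro u hu
      have : (OreLocalization.numeratorUnit ⟨1, Submonoid.one_mem _⟩ :
          (ALoc K (P : K) (Q : K))ˣ) = 1 :=
        Units.ext OreLocalization.one_def.symm
      rw [this, inv_one, Units.val_one, mul_one]
      exact hu
    | mul a b ha hb iha ihb =>
      intro u hu
      have : (OreLocalization.numeratorUnit ⟨a * b, Submonoid.mul_mem _ ha hb⟩ :
          (ALoc K (P : K) (Q : K))ˣ) = OreLocalization.numeratorUnit (S := locS K (P : K) (Q : K)) ⟨a, ha⟩ *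
            OreLocalization.numeratorUnit (S := locS K (P : K) (Q : K)) ⟨b, hb⟩ :=
        Units.ext OreLocalization.mul_div_one.symm
      rw [this, mul_inv_rev, Units.val_mul, ← mul_assoc]
      exact iha _ (ihb _ hu)
  rw [eq_top_iff]
  intro u _
  induction u using OreLocalization.ind with
  | _ r s =>
    have h2 := hnum r _ (hinv s s.2 1 h1)
    rw [one_mul] at h2
    have h3 : ((1 : ExtWeyl K (P : K) (Q : K) 1 1) /ₒ s) *
        (r /ₒ (1 : locS K (P : K) (Q : K))) = r /ₒ s := by
      rw [OreLocalization.mul_div_one, one_mul]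
    rw [← h3]
    exact h2

lemma num_weyl : lx K (P : K) (Q : K) * ly K (P : K) (Q : K) -
    (P : K) • (ly K (P : K) (Q : K) * lx K (P : K) (Q : K)) = 1 := by
  have h := congrArg (num (P := P) (Q := Q)) (RingQuot.mkAlgHom_rel K
    (ExtWeylRel.weyl (K := K) (p := P) (q := Q) (lam := 1) (mu := 1)))
  simp only [map_sub, map_smul, map_mul, map_one] at h
  exact h

lemma num_z : lz K (P : K) (Q : K) = lx K (P : K) (Q : K) * ly K (P : K) (Q : K) -
    ly K (P : K) (Q : K) * lx K (P : K) (Q : K) := by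
  have h : num (wz K (P : K) (Q : K)) = num (wx K (P : K) (Q : K)) * num (wy K (P : K) (Q : K)) -
      num (wy K (P : K) (Q : K)) * num (wx K (P : K) (Q : K)) := by
    rw [wz, map_sub, map_mul, map_mul]
  exact h

lemma num_st : ls K (P : K) (Q : K) * lt K (P : K) (Q : K) =
    (Q : K) • (lt K (P : K) (Q : K) * ls K (P : K) (Q : K)) := by
  have h := congrArg (num (P := P) (Q := Q)) (RingQuot.mkAlgHom_rel K
    (ExtWeylRel.st (K := K) (p := P) (q := Q) (lam := 1) (mu := 1)))
  simp only [map_smul, map_mul] at h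
  exact h

lemma num_sx : ls K (P : K) (Q : K) * lx K (P : K) (Q : K) =
    lx K (P : K) (Q : K) * ls K (P : K) (Q : K) := by
  have h := congrArg (num (P := P) (Q := Q)) (RingQuot.mkAlgHom_rel K
    (ExtWeylRel.sx (K := K) (p := P) (q := Q) (lam := 1) (mu := 1)))
  simp only [map_mul, one_smul] at h
  exact h

lemma num_sy : ls K (P : K) (Q : K) * ly K (P : K) (Q : K) =
    ly K (P : K) (Q : K) * ls K (P : K) (Q : K) := by
  have h := congrArg (num (P := P) (Q := Q)) (RingQuot.mkAlgHom_rel K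
    (ExtWeylRel.sy (K := K) (p := P) (q := Q) (lam := 1) (mu := 1)))
  simp only [map_mul, inv_one, one_smul] at h
  exact h

lemma num_tx : lt K (P : K) (Q : K) * lx K (P : K) (Q : K) =
    lx K (P : K) (Q : K) * lt K (P : K) (Q : K) := by
  have h := congrArg (num (P := P) (Q := Q)) (RingQuot.mkAlgHom_rel K
    (ExtWeylRel.tx (K := K) (p := P) (q := Q) (lam := 1) (mu := 1)))
  simp only [map_mul, one_smul] at h
  exact h

lemma num_ty : lt K (P : K) (Q : K) * ly K (P : K) (Q : K) =
    ly K (P : K) (Q : K) * lt K (P : K) (Q : K) := by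
  have h := congrArg (num (P := P) (Q := Q)) (RingQuot.mkAlgHom_rel K
    (ExtWeylRel.ty (K := K) (p := P) (q := Q) (lam := 1) (mu := 1)))
  simp only [map_mul, inv_one, one_smul] at h
  exact h

lemma coe_uz : ((uz K (P : K) (Q : K) : (ALoc K (P : K) (Q : K))ˣ) : ALoc K (P : K) (Q : K)) =
    lz K (P : K) (Q : K) := rfl
lemma coe_us : ((us K (P : K) (Q : K) : (ALoc K (P : K) (Q : K))ˣ) : ALoc K (P : K) (Q : K)) =
    ls K (P : K) (Q : K) := rfl
lemma coe_ut : ((ut K (P : K) (Q : K) : (ALoc K (P : K) (Q : K))ˣ) : ALoc K (P : K) (Q : K)) =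
    lt K (P : K) (Q : K) := rfl

/-- The localization `A_S` is presented in the sense of `Presented`. -/
def presented (hP : (P : K) - 1 ≠ 0) : Presented P Q (ALoc K (P : K) (Q : K)) where
  X := lx K P Q
  Y := ly K P Q
  Z := uz K P Q
  S := us K P Q
  T := ut K P Q
  xy := rel_xy num_z num_weyl hP
  yx := rel_yx num_z num_weyl hP
  xz := rel_xz num_z num_weyl
  yz := qcomm_symm (rel_zy num_z num_weyl)
  xs := num_sx.symm
  ys := num_sy.symm
  xt := num_tx.symm
  yt := num_ty.symm
  sz := Units.ext (by
    rw [Units.val_mul, Units.val_mul, coe_uz, coe_us, num_z]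
    exact comm_z (R := ALoc K (P : K) (Q : K)) num_sx num_sy)
  tz := Units.ext (by
    rw [Units.val_mul, Units.val_mul, coe_uz, coe_ut, num_z]
    exact comm_z (R := ALoc K (P : K) (Q : K)) num_tx num_ty)
  st := num_st
  gen := loc_gen
  ψ := locToTorus hP
  ψX := (locToTorus_num hP _).trans (toTorus_ι hP 0)
  ψY := (locToTorus_num hP _).trans (toTorus_ι hP 1)
  ψZ := (locToTorus_num hP _).trans (toTorus_z hP)
  ψS := (locToTorus_num hP _).trans (toTorus_ι hP 2)
  ψT := (locToTorus_num hP _).trans (toTorus_ι hP 3)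

lemma zpow_injective_of {p : Kˣ} (h : ∀ n : ℕ, 0 < n → (p : K) ^ n ≠ 1) :
    Function.Injective fun n : ℤ => p ^ n := by
  rw [injective_zpow_iff_not_isOfFinOrder, isOfFinOrder_iff_pow_eq_one]
  rintro ⟨n, hn, e⟩
  exact h n hn (by rw [← Units.val_pow_eq_pow_val, e, Units.val_one])

end Instance

end DixLoc

/-- Assume neither `p` nor `q` is a root of unity. Then every unital
`K`-algebra endomorphism of the localization `(A_p(1, 1, K_q[s,t]))_S` is bijective, i.e.
is a `K`-algebra automorphism (a quantum analogue of the Dixmier conjecture). -/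
theorem aloc_endomorphism_bijective
    (hp : p ≠ 0) (hq : q ≠ 0)
    (hpru : ∀ n : ℕ, 0 < n → p ^ n ≠ 1) (hqru : ∀ n : ℕ, 0 < n → q ^ n ≠ 1)
    (φ : ALoc K p q →ₐ[K] ALoc K p q) :
    Function.Bijective φ := by
  obtain ⟨P, rfl⟩ : ∃ P : Kˣ, (P : K) = p := ⟨Units.mk0 p hp, rfl⟩
  obtain ⟨Q, rfl⟩ : ∃ Q : Kˣ, (Q : K) = q := ⟨Units.mk0 q hq, rfl⟩
  have hP := DixLoc.zpow_injective_of hpru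
  exact (DixLoc.presented (DixLoc.Presented.P_sub_one hP)).bijective hP
    (DixLoc.zpow_injective_of hqru) φ
end
end

section
/- Assume neither p nor q is a root of unity, and let A_S be the localization of A = A_p(1, 1, K_q[s,t]) at S. Let ψ_− be the K-algebra automorphism of A_S determined by ψ_−(x) = y, ψ_−(y) = −p⁻¹z⁻¹x, ψ_−(s) = s, ψ_−(t) = t (so ψ_−(z) = p⁻¹z⁻¹), let G_+ ⊆ Aut_K(A_S) be the set of positive-type automorphisms and G_− = {ψ_−⁻¹ ∘ φ_+ : φ_+ ∈ G_+}. Then every K-algebra automorphism of A_S is of exactly one of positive or negative type, Aut_K(A_S) is the disjoint union G_+ ⊔ G_−, G_+ is a normal subgroup of index 2, and there is a short exact sequence of groups 1 → G_+ → Aut_K(A_S) → Z/2Z → 1. -/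
/-!
Let the generators act on functions `F : ℤ³ → K` by weighted shifts: `x` shifts the first
coordinate `n` up, `y` shifts it down with weight `(pⁿ - 1)/(p - 1)`, `s` shifts the second
coordinate `m`, and `t` shifts the third one with weight `q^m`. Then `z` acts
diagonally by `pⁿ`, so `z, s, t` act invertibly and the representation extends to `A_S`.

The algebra `A_S` is spanned by homogeneous components indexed by `ℤ³`: the component of degree
`(d, i, j)` is `K[z, z⁻¹] x^d s^i t^j`, with `y^(-d)` in place of `x^d` if `d < 0`
(`QWeyl.iSup_Hom`). Because `p` is not a root of unity, a nonzero homogeneous element acts as a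
shift by its degree whose weight is nonzero for large `n` (`QWeyl.isShift_of_mem`). As `ℤ³` has
the two-unique-sums property, units are therefore homogeneous (`QWeyl.unit_homogeneous`). The
weight of `y` vanishes at `n = 0`, so a unit cannot have negative `x`-degree, and applying this to
its inverse, its `x`-degree is `0` (`QWeyl.not_neg_degree`). Thus a unit is a Laurent polynomial in
`z` times `s^i t^j`, and `z` commutes with all units (`QWeyl.commute_z`).

An automorphism `φ` permutes the units, so `φ(z)` is a unit commuting with all units, in particular
with `s` and `t`. Because `q` is not a root of unity, such a unit is `α z^i`
(`QWeyl.unit_eq_zpow`), and comparison with `φ⁻¹` gives `i = ±1` (`QWeyl.aut_z`). Products of types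
follow the rule of signs, and `ψ₋` is of negative type, so the positive automorphisms form a
subgroup of index `2` with quotient `ℤ/2ℤ` (`QWeyl.group_structure`).
-/

noncomputable section

open FreeAlgebra

variable (K : Type*) [Field K] (p q : K)

variable [OreLocalization.OreSet (locS K p q)]

/-- An automorphism of `A_S` is of positive type if `φ(z) = α·z` for some `α ∈ K^×`. -/
def PosType (φ : ALoc K p q ≃ₐ[K] ALoc K p q) : Prop :=
  ∃ α : Kˣ, φ (lz K p q) = (α : K) • lz K p q

/-- An automorphism of `A_S` is of negative type if `φ(z) = α·z⁻¹` for some `α ∈ K^×`. -/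
def NegType (φ : ALoc K p q ≃ₐ[K] ALoc K p q) : Prop :=
  ∃ α : Kˣ, φ (lz K p q) = (α : K) • (((uz K p q)⁻¹ : (ALoc K p q)ˣ) : ALoc K p q)

namespace ExtWeylAut

/-! ### Weighted shift operators on functions `ℤ³ → k` -/

/-- The grading group. The degrees of `x, y, s, t` are `(1,0,0)`, `(-1,0,0)`, `(0,1,0)`,
`(0,0,1)`; `z` has degree `0`. -/
abbrev Idx := ℤ × ℤ × ℤ

section Shift
variable {k : Type*} [Field k]

/-- The weighted shift `(W g c F)(h) = c(h) F(h + g)`. -/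
def W (g : Idx) (c : Idx → k) : Module.End k (Idx → k) where
  toFun F h := c h * F (h + g)
  map_add' F F' := by ext h; simp [mul_add]
  map_smul' r F := by ext h; simp [mul_left_comm]

@[simp] lemma W_apply (g : Idx) (c : Idx → k) (F : Idx → k) (h : Idx) :
    W g c F h = c h * F (h + g) := rfl

lemma W_mul (g g' : Idx) (c c' : Idx → k) :
    W g c * W g' c' = W (g + g') (fun h => c h * c' (h + g)) := by
  ext F h
  simp [Module.End.mul_apply, mul_assoc, add_assoc]

lemma W_one : W (0 : Idx) (fun _ => (1 : k)) = 1 := by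
  ext F h; simp

/-- Evaluating at `h` after applying to the delta function at `h + g` reads off the weight at
`h` of the shift by `g`, and kills every other shift. -/
lemma W_single (g g' : Idx) (c : Idx → k) (h : Idx) :
    W g' c (Pi.single (h + g) 1) h = if g' = g then c h else 0 := by
  by_cases hg : g' = g
  · simp [hg]
  · have : h + g' ≠ h + g := by simpa using hg
    simp [hg]

/-- The weight `c` has no zero whose first coordinate is large. Weights such as `(pⁿ - 1)/(p - 1)`
or `P(pⁿ)` do have zeros; this weaker property is stable under products and shifts. -/
def EvNZ (c : Idx → k) : Prop := ∃ N : ℤ, ∀ h : Idx, N ≤ h.1 → c h ≠ 0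

lemma EvNZ.mul_shift {c c' : Idx → k} (hc : EvNZ c) (hc' : EvNZ c') (g : Idx) :
    EvNZ (fun h => c h * c' (h + g)) := by
  obtain ⟨N, hN⟩ := hc
  obtain ⟨N', hN'⟩ := hc'
  refine ⟨max N (N' - g.1), fun h hh => mul_ne_zero (hN h (le_trans (le_max_left _ _) hh)) ?_⟩
  apply hN'
  have := le_trans (le_max_right _ _) hh
  simp only [Prod.fst_add]; omega

/-- `T` is a shift by `g` with an eventually nonvanishing weight. -/
def IsShift (g : Idx) (T : Module.End k (Idx → k)) : Prop := ∃ c, T = W g c ∧ EvNZ c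

lemma IsShift.mul {g g' : Idx} {T T' : Module.End k (Idx → k)} (h : IsShift g T)
    (h' : IsShift g' T') : IsShift (g + g') (T * T') := by
  obtain ⟨c, rfl, hc⟩ := h
  obtain ⟨c', rfl, hc'⟩ := h'
  exact ⟨_, W_mul _ _ _ _, hc.mul_shift hc' g⟩

lemma isShift_one : IsShift 0 (1 : Module.End k (Idx → k)) :=
  ⟨_, W_one.symm, 0, fun _ _ => one_ne_zero⟩

lemma IsShift.pow {g : Idx} {T : Module.End k (Idx → k)} (h : IsShift g T) (n : ℕ) :
    IsShift (n • g) (T ^ n) := by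
  induction n with
  | zero => simpa using isShift_one
  | succ n ih => rw [pow_succ, succ_nsmul]; exact ih.mul h

end Shift

/-! ### Relations in the localized algebra -/

/-- The data on a `k`-algebra `B` used in the argument, abstracting `A_S`: elements satisfying the
defining relations of `A`, with `z, s, t` invertible; the weighted shift representation `ρ`, in
which `x` raises the first coordinate and `y` acts by the `p`-integer `(pⁿ - 1)/(p - 1)` times the
opposite shift; and the fact that the generators and the three inverses generate `B`. -/
structure QWeyl (k : Type*) [Field k] (p q : k) (B : Type*) [Ring B] [Algebra k B] where
  x : B
  y : B
  z : Bˣ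
  s : Bˣ
  t : Bˣ
  ρ : B →ₐ[k] Module.End k (Idx → k)
  hxy : x * y = 1 + p • (y * x)
  hz : (z : B) = x * y - y * x
  hst : (s : B) * t = q • ((t : B) * s)
  hsx : (s : B) * x = x * s
  hsy : (s : B) * y = y * s
  htx : (t : B) * x = x * t
  hty : (t : B) * y = y * t
  ρx : ρ x = W (1, 0, 0) (fun _ => 1)
  ρy : ρ y = W (-1, 0, 0) (fun h => (p ^ h.1 - 1) / (p - 1))
  ρs : ρ s = W (0, 1, 0) (fun _ => 1)
  ρt : ρ t = W (0, 0, 1) (fun h => q ^ h.2.1)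
  gen : ∀ S : Subalgebra k B, x ∈ S → y ∈ S → (z : B) ∈ S → (s : B) ∈ S → (t : B) ∈ S →
    ((z⁻¹ : Bˣ) : B) ∈ S → ((s⁻¹ : Bˣ) : B) ∈ S → ((t⁻¹ : Bˣ) : B) ∈ S → S = ⊤

namespace QWeyl

open Polynomial

variable {k : Type*} [Field k] {p q : k} {B : Type*} [Ring B] [Algebra k B]
  (D : QWeyl k p q B)

lemma z_eq : (D.z : B) = 1 + (p - 1) • (D.y * D.x) := by
  rw [D.hz, D.hxy]; module

lemma x_z : D.x * D.z = p • ((D.z : B) * D.x) := by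
  have h : D.x * (D.y * D.x) = (1 + p • (D.y * D.x)) * D.x := by rw [← mul_assoc, D.hxy]
  rw [z_eq, mul_add, mul_smul_comm, h]
  simp only [add_mul, one_mul, mul_one, smul_mul_assoc]
  module

lemma z_y : (D.z : B) * D.y = p • (D.y * D.z) := by
  have h : D.y * D.x * D.y = D.y * (1 + p • (D.y * D.x)) := by rw [mul_assoc, D.hxy]
  rw [z_eq, add_mul, smul_mul_assoc, h]
  simp only [mul_add, one_mul, mul_one, mul_smul_comm]
  module

lemma s_z : (D.s : B) * D.z = D.z * D.s := by
  have h1 : (D.s : B) * (D.x * D.y) = D.x * D.y * D.s := by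
    rw [← mul_assoc, D.hsx, mul_assoc, D.hsy, mul_assoc]
  have h2 : (D.s : B) * (D.y * D.x) = D.y * D.x * D.s := by
    rw [← mul_assoc, D.hsy, mul_assoc, D.hsx, mul_assoc]
  rw [D.hz, mul_sub, sub_mul, h1, h2]

lemma t_z : (D.t : B) * D.z = D.z * D.t := by
  have h1 : (D.t : B) * (D.x * D.y) = D.x * D.y * D.t := by
    rw [← mul_assoc, D.htx, mul_assoc, D.hty, mul_assoc]
  have h2 : (D.t : B) * (D.y * D.x) = D.y * D.x * D.t := by
    rw [← mul_assoc, D.hty, mul_assoc, D.htx, mul_assoc]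
  rw [D.hz, mul_sub, sub_mul, h1, h2]

lemma ρz (hp : p ≠ 0) (hp1 : p - 1 ≠ 0) : D.ρ D.z = W 0 (fun h => p ^ h.1) := by
  rw [D.hz, map_sub, map_mul, map_mul, D.ρx, D.ρy, W_mul, W_mul]
  ext F h
  have h0 : h + ((0 : ℤ), (0 : ℤ), (0 : ℤ)) = h := add_zero h
  simp [zpow_add₀ hp, h0]
  field_simp
  ring

lemma ρ_inv (u : Bˣ) (g : Idx) (c : Idx → k) (hu : D.ρ u = W g c) (hc : ∀ h, c h ≠ 0) :
    D.ρ (u⁻¹ : Bˣ) = W (-g) (fun h => (c (h - g))⁻¹) := by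
  have h1 : W (-g) (fun h => (c (h - g))⁻¹) * D.ρ u = 1 := by
    rw [hu, W_mul, ← W_one]
    congr 1
    · simp
    · ext h; rw [← sub_eq_add_neg]; exact inv_mul_cancel₀ (hc _)
  have h2 : D.ρ u * D.ρ (u⁻¹ : Bˣ) = 1 := by rw [← map_mul]; simp
  calc D.ρ (u⁻¹ : Bˣ) = W (-g) (fun h => (c (h - g))⁻¹) * D.ρ u * D.ρ (u⁻¹ : Bˣ) := by
        rw [h1, one_mul]
    _ = _ := by rw [mul_assoc, h2, mul_one]

lemma isShift_zpow (u : Bˣ) (g : Idx) (c : Idx → k) (hu : D.ρ u = W g c) (hc : ∀ h, c h ≠ 0)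
    (n : ℤ) : IsShift (n • g) (D.ρ (u ^ n : Bˣ)) := by
  have h1 : IsShift g (D.ρ u) := ⟨c, hu, 0, fun h _ => hc h⟩
  have h2 : IsShift (-g) (D.ρ (u⁻¹ : Bˣ)) :=
    ⟨_, D.ρ_inv u g c hu hc, 0, fun h _ => inv_ne_zero (hc _)⟩
  obtain ⟨n, rfl | rfl⟩ := n.eq_nat_or_neg
  · have := h1.pow n
    rw [← map_pow] at this
    simpa using this
  · have := h2.pow n
    rw [← map_pow] at this
    simpa using this

/-! ### Monomials and their action -/

/-- The degree `d` power in the Weyl part: `x ^ d` for `d ≥ 0` and `y ^ (-d)` for `d ≤ 0`. -/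
def xp (d : ℤ) : B := D.x ^ d.toNat * D.y ^ (-d).toNat

/-- The monomial of degree `g`, with its Weyl part first and then `s` and `t`. -/
def mon (g : Idx) : B := D.xp g.1 * ((D.s ^ g.2.1 : Bˣ) : B) * ((D.t ^ g.2.2 : Bˣ) : B)

lemma p_sub_one (hpru : ∀ n : ℕ, 0 < n → p ^ n ≠ 1) : p - 1 ≠ 0 := by
  have := hpru 1 one_pos
  rw [pow_one] at this
  exact sub_ne_zero.2 this

/-- An element all of whose positive powers differ from `1` has no nontrivial integer power `1`. -/
lemma zpow_ne (hpru : ∀ n : ℕ, 0 < n → p ^ n ≠ 1) {n : ℤ} (hn : p ^ n = 1) :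
    n = 0 := by
  obtain ⟨n, rfl | rfl⟩ := n.eq_nat_or_neg
  · by_contra h
    exact hpru n (by omega) (by simpa using hn)
  · by_contra h
    exact hpru n (by omega) (by simpa using hn)

lemma isShift_y (hpru : ∀ n : ℕ, 0 < n → p ^ n ≠ 1) :
    IsShift (-1, 0, 0) (D.ρ D.y) := by
  refine ⟨_, D.ρy, 1, fun h hh => div_ne_zero (sub_ne_zero.2 fun h0 => ?_) (p_sub_one hpru)⟩
  have := zpow_ne hpru h0
  omega

lemma isShift_mon (hq : q ≠ 0) (hpru : ∀ n : ℕ, 0 < n → p ^ n ≠ 1) (g : Idx) :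
    IsShift g (D.ρ (D.mon g)) := by
  have h1 : IsShift (1, 0, 0) (D.ρ D.x) := ⟨_, D.ρx, 0, fun _ _ => one_ne_zero⟩
  have hx := h1.pow g.1.toNat
  have hy := (D.isShift_y hpru).pow (-g.1).toNat
  have hs := D.isShift_zpow D.s _ _ D.ρs (fun _ => one_ne_zero) g.2.1
  have ht := D.isShift_zpow D.t _ _ D.ρt (fun _ => zpow_ne_zero _ hq) g.2.2
  have := ((hx.mul hy).mul hs).mul ht
  rw [mon, xp, map_mul, map_mul, map_mul, map_pow, map_pow]
  convert this using 1
  ext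
  · simp; omega
  · simp
  · simp

/-- The weight of `y` vanishes on the plane `n = 0`, hence so does everything of the form
`ρ (mon g) F` with `g` of negative `x`-degree. -/
lemma mon_vanish {g : Idx} (hg : g.1 < 0) (F : Idx → k) (j l : ℤ) :
    D.ρ (D.mon g) F (0, j, l) = 0 := by
  obtain ⟨n, hn⟩ : ∃ n, (-g.1).toNat = n + 1 := ⟨(-g.1).toNat - 1, by omega⟩
  have h0 : g.1.toNat = 0 := by omega
  rw [mon, xp, hn, h0, pow_zero, one_mul, pow_succ']
  simp [D.ρy, Module.End.mul_apply]

lemma ρ_aeval (hp : p ≠ 0) (hpru : ∀ n : ℕ, 0 < n → p ^ n ≠ 1) (P : k[X]) :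
    D.ρ (aeval (D.z : B) P) = W 0 (fun h => P.eval (p ^ h.1)) := by
  induction P using Polynomial.induction_on' with
  | add P Q hP hQ => rw [map_add, map_add, hP, hQ]; ext F h; simp [add_mul]
  | monomial n a =>
    rw [aeval_monomial, map_mul, map_pow, D.ρz hp (p_sub_one hpru), AlgHom.commutes]
    have : (W 0 (fun h : Idx => p ^ h.1)) ^ n = W 0 (fun h : Idx => (p ^ h.1) ^ n) := by
      induction n with
      | zero => simp [W_one]
      | succ n ih => rw [pow_succ, ih, W_mul]; simp [pow_succ]
    rw [this]
    ext F h
    simp [Module.algebraMap_end_apply, mul_assoc]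

/-- The values `p ^ n` are pairwise distinct, so a nonzero polynomial vanishes at finitely many
of them. -/
lemma evNZ_eval (hp : p ≠ 0) (hpru : ∀ n : ℕ, 0 < n → p ^ n ≠ 1) {P : k[X]} (hP : P ≠ 0) :
    EvNZ (fun h : Idx => P.eval (p ^ h.1)) := by
  have hinj : Function.Injective (fun n : ℤ => p ^ n) := by
    intro m n hmn
    have : p ^ (m - n) = 1 := by
      rw [zpow_sub₀ hp]; simp only at hmn; rw [hmn]
      exact div_self (zpow_ne_zero _ hp)
    have := zpow_ne hpru this
    omega
  have hfin : ((fun n : ℤ => p ^ n) ⁻¹' {a | P.IsRoot a}).Finite :=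
    (Polynomial.finite_setOfPred_isRoot hP).preimage hinj.injOn
  obtain ⟨N, hN⟩ := hfin.bddAbove
  refine ⟨N + 1, fun h hh h0 => ?_⟩
  have := hN (show h.1 ∈ _ from h0)
  omega

/-! ### The homogeneous components -/

/-- The component of degree `g`: the `k[z, z⁻¹]`-multiples of `mon g`, written with the
denominator `z ^ n` cleared. -/
def Hom (g : Idx) : Submodule k B where
  carrier := {a | ∃ (n : ℕ) (P : k[X]), (D.z : B) ^ n * a = aeval (D.z : B) P * D.mon g}
  zero_mem' := ⟨0, 0, by simp⟩
  add_mem' := by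
    rintro a b ⟨n, P, h⟩ ⟨m, Q, h'⟩
    refine ⟨n + m, X ^ m * P + X ^ n * Q, ?_⟩
    have e : (D.z : B) ^ (n + m) * a = (D.z : B) ^ m * ((D.z : B) ^ n * a) := by
      rw [← mul_assoc, ← pow_add, add_comm]
    have e' : (D.z : B) ^ (n + m) * b = (D.z : B) ^ n * ((D.z : B) ^ m * b) := by
      rw [← mul_assoc, ← pow_add]
    rw [mul_add, e, e', h, h']
    simp [add_mul, mul_assoc]
  smul_mem' := by
    rintro r a ⟨n, P, h⟩
    exact ⟨n, r • P, by rw [mul_smul_comm, h, map_smul, smul_mul_assoc]⟩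

lemma mem_Hom {g : Idx} {a : B} : a ∈ D.Hom g ↔
    ∃ (n : ℕ) (P : k[X]), (D.z : B) ^ n * a = aeval (D.z : B) P * D.mon g := Iff.rfl

/-- A nonzero homogeneous element of degree `g` acts as a shift by `g`; this both separates the
components and makes products of nonzero homogeneous elements act nontrivially. -/
lemma isShift_of_mem (hp : p ≠ 0) (hq : q ≠ 0) (hpru : ∀ n : ℕ, 0 < n → p ^ n ≠ 1) {g : Idx}
    {a : B} (ha : a ∈ D.Hom g) (ha0 : a ≠ 0) : IsShift g (D.ρ a) := by
  obtain ⟨n, P, h⟩ := ha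
  have hP : P ≠ 0 := by
    rintro rfl
    rw [map_zero, zero_mul] at h
    exact ha0 ((D.z ^ n).mul_right_eq_zero.1 (by simpa using h))
  have h1 : IsShift 0 (D.ρ (aeval (D.z : B) P)) :=
    ⟨_, D.ρ_aeval hp hpru P, evNZ_eval hp hpru hP⟩
  have h2 := D.isShift_zpow D.z _ _ (D.ρz hp (p_sub_one hpru)) (fun _ => zpow_ne_zero _ hp) (-n)
  have h3 := (h2.mul h1).mul (D.isShift_mon hq hpru g)
  have e : ((D.z ^ (-(n : ℤ)) : Bˣ) : B) * (D.z : B) ^ n = 1 := by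
    rw [← Units.val_pow_eq_pow_val, ← Units.val_mul]; simp
  rw [mul_assoc, ← map_mul, ← h, ← map_mul, ← mul_assoc, e] at h3
  simpa using h3

lemma semi_pow {w : B} {r : k} (hw : w * D.z = r • ((D.z : B) * w)) (n : ℕ) :
    w * (D.z : B) ^ n = r ^ n • ((D.z : B) ^ n * w) := by
  induction n with
  | zero => simp
  | succ n ih =>
    rw [pow_succ, ← mul_assoc, ih, smul_mul_assoc, mul_assoc, hw, mul_smul_comm, smul_smul,
      pow_succ, mul_assoc]

lemma semi_aeval {w : B} {r : k} (hw : w * D.z = r • ((D.z : B) * w)) (P : k[X]) :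
    w * aeval (D.z : B) P = aeval (D.z : B) (P.comp (C r * X)) * w := by
  induction P using Polynomial.induction_on' with
  | add P Q hP hQ => simp [mul_add, add_mul, hP, hQ]
  | monomial n a =>
    rw [aeval_monomial, ← mul_assoc, ← Algebra.commutes, mul_assoc, D.semi_pow hw]
    simp only [monomial_comp, mul_pow, map_mul, aeval_C, map_pow, aeval_X,
      Algebra.smul_def, mul_assoc]

/-- If left multiplication by `w` maps one monomial into the `k[z]`-multiples of another, and `w`
commutes with `z` up to a nonzero scalar, then it maps the component of the first monomial into
that of the second. -/
lemma mul_mem_Hom {w : B} {r : k} (hr : r ≠ 0) (hw : w * D.z = r • ((D.z : B) * w)) {g g' : Idx}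
    (R : k[X]) (hm : w * D.mon g = aeval (D.z : B) R * D.mon g') {a : B} (ha : a ∈ D.Hom g) :
    w * a ∈ D.Hom g' := by
  obtain ⟨n, P, h⟩ := ha
  have h1 := D.semi_pow hw n
  rw [Algebra.smul_def] at h1
  refine ⟨n, C (r ^ n)⁻¹ * (P.comp (C r * X) * R), ?_⟩
  rw [map_mul, aeval_C, map_mul, mul_assoc (algebraMap k B _), mul_assoc (aeval _ _), ← hm,
    ← mul_assoc (aeval _ _), ← D.semi_aeval hw, mul_assoc w, ← h, ← mul_assoc w, h1,
    ← mul_assoc (algebraMap k B _), ← mul_assoc (algebraMap k B _),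
    ← map_mul,
    inv_mul_cancel₀ (pow_ne_zero _ hr), map_one, one_mul, mul_assoc]

lemma x_xp (hp1 : p - 1 ≠ 0) (d : ℤ) :
    ∃ R : k[X], D.x * D.xp d = aeval (D.z : B) R * D.xp (1 + d) := by
  rcases le_or_gt 0 d with hd | hd
  · obtain ⟨n, rfl⟩ := Int.eq_ofNat_of_zero_le hd
    refine ⟨1, ?_⟩
    have e : (1 + (n : ℤ)).toNat = n + 1 := by omega
    have e1 : (-(n : ℤ)).toNat = 0 := by omega
    have e2 : (-(n : ℤ) + -1).toNat = 0 := by omega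
    simp [xp, e, e1, e2, pow_succ']
  · obtain ⟨n, rfl⟩ : ∃ n : ℕ, d = -((n : ℤ) + 1) := ⟨(-d).toNat - 1, by omega⟩
    refine ⟨C (p - 1)⁻¹ * (C p * X - 1), ?_⟩
    have e : (-(n : ℤ)).toNat = 0 := by omega
    have e2 : (-((n : ℤ) + 1)).toNat = 0 := by omega
    have e3 : (-(-((n : ℤ) + 1))).toNat = n + 1 := by omega
    have e4 : 1 + -((n : ℤ) + 1) = -(n : ℤ) := by omega
    have key : D.x * D.y = aeval (D.z : B) (C (p - 1)⁻¹ * (C p * X - 1)) := by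
      simp only [map_mul, map_sub, aeval_C, aeval_X, map_one, ← Algebra.smul_def]
      rw [D.z_eq, D.hxy, eq_inv_smul_iff₀ hp1]
      module
    rw [← key]
    simp only [xp, e, e2, e3, e4, pow_succ']
    simp [mul_assoc]

lemma y_xp (hp1 : p - 1 ≠ 0) (d : ℤ) :
    ∃ R : k[X], D.y * D.xp d = aeval (D.z : B) R * D.xp (-1 + d) := by
  rcases le_or_gt d 0 with hd | hd
  · obtain ⟨n, rfl⟩ : ∃ n : ℕ, d = -(n : ℤ) := ⟨(-d).toNat, by omega⟩
    refine ⟨1, ?_⟩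
    have e1 : (-(n : ℤ)).toNat = 0 := by omega
    have e2 : (-1 + -(n : ℤ)).toNat = 0 := by omega
    simp [xp, e1, e2, pow_succ']
  · obtain ⟨n, rfl⟩ : ∃ n : ℕ, d = ((n : ℤ) + 1) := ⟨d.toNat - 1, by omega⟩
    refine ⟨C (p - 1)⁻¹ * (X - 1), ?_⟩
    have e : (-(n : ℤ)).toNat = 0 := by omega
    have e2 : (-((n : ℤ) + 1)).toNat = 0 := by omega
    have e3 : ((n : ℤ) + 1).toNat = n + 1 := by omega
    have e4 : -1 + ((n : ℤ) + 1) = (n : ℤ) := by omega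
    have key : D.y * D.x = aeval (D.z : B) (C (p - 1)⁻¹ * (X - 1)) := by
      simp only [map_mul, map_sub, aeval_C, aeval_X, map_one, ← Algebra.smul_def]
      rw [D.z_eq, eq_inv_smul_iff₀ hp1]
      module
    rw [← key]
    simp only [xp, e, e2, e3, e4, pow_succ']
    simp [mul_assoc]

lemma xp_commute {w : B} (hx : Commute w D.x) (hy : Commute w D.y) (d : ℤ) :
    Commute w (D.xp d) := (hx.pow_right _).mul_right (hy.pow_right _)

/-- A nonzero scalar `q` as a unit of `B`. -/
def qu (hq : q ≠ 0) : Bˣ := Units.map (algebraMap k B).toMonoidHom (Units.mk0 q hq)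

lemma qu_comm (hq : q ≠ 0) (u : Bˣ) : Commute (qu (B := B) hq) u := by
  apply Units.ext
  exact Algebra.commutes q (u : B)

lemma val_qu_zpow (hq : q ≠ 0) (n : ℤ) :
    ((qu (B := B) hq ^ n : Bˣ) : B) = algebraMap k B (q ^ n) := by
  rw [qu, ← map_zpow]
  change algebraMap k B ((Units.mk0 q hq ^ n : kˣ) : k) = _
  simp

/-- In a group, if `a b = c b a` with `c` commuting with `a` and `b`, then `b ^ j` and
`a ^ i` commute up to `c ^ (-(j i))`. -/
lemma zpow_zpow_comm {G : Type*} [Group G] {a b c : G} (h : a * b = c * b * a)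
    (ha : Commute c a) (hb : Commute c b) (i j : ℤ) :
    b ^ j * a ^ i = c ^ (-(j * i)) * a ^ i * b ^ j := by
  have h1 : SemiconjBy a (b ^ j) ((c * b) ^ j) := SemiconjBy.zpow_right h j
  rw [hb.mul_zpow] at h1
  have h2 : SemiconjBy (b ^ j) a (c ^ (-j) * a) := by
    unfold SemiconjBy at h1 ⊢
    rw [mul_assoc, h1, ← mul_assoc, ← mul_assoc]; simp
  have h3 := SemiconjBy.zpow_right h2 i
  rw [(ha.zpow_left (-j)).mul_zpow, ← zpow_mul] at h3
  unfold SemiconjBy at h3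
  rw [h3]; simp

lemma units_st (hq : q ≠ 0) : D.s * D.t = qu hq * D.t * D.s := by
  apply Units.ext
  simp only [Units.val_mul, D.hst, qu, Algebra.smul_def, mul_assoc]
  rfl

lemma t_s_zpow (hq : q ≠ 0) (i j : ℤ) :
    D.t ^ j * D.s ^ i = qu hq ^ (-(j * i)) * D.s ^ i * D.t ^ j :=
  zpow_zpow_comm (D.units_st hq) (qu_comm hq _) (qu_comm hq _) i j

lemma s_mem (e : ℤ) (g : Idx) {a : B} (ha : a ∈ D.Hom g) :
    ((D.s ^ e : Bˣ) : B) * a ∈ D.Hom (g.1, e + g.2.1, g.2.2) := by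
  have hz : Commute ((D.s ^ e : Bˣ) : B) D.z := Commute.units_zpow_left D.s_z e
  have hx : Commute ((D.s ^ e : Bˣ) : B) D.x := Commute.units_zpow_left D.hsx e
  have hy : Commute ((D.s ^ e : Bˣ) : B) D.y := Commute.units_zpow_left D.hsy e
  refine D.mul_mem_Hom one_ne_zero (by rw [one_smul]; exact hz) 1 ?_ ha
  have h := D.xp_commute hx hy g.1
  rw [mon, mon, map_one, one_mul, zpow_add, Units.val_mul, ← mul_assoc, ← mul_assoc, h.eq,
    ← mul_assoc]

lemma t_mem (hq : q ≠ 0) (e : ℤ) (g : Idx) {a : B} (ha : a ∈ D.Hom g) :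
    ((D.t ^ e : Bˣ) : B) * a ∈ D.Hom (g.1, g.2.1, e + g.2.2) := by
  have hz : Commute ((D.t ^ e : Bˣ) : B) D.z := Commute.units_zpow_left D.t_z e
  have hx : Commute ((D.t ^ e : Bˣ) : B) D.x := Commute.units_zpow_left D.htx e
  have hy : Commute ((D.t ^ e : Bˣ) : B) D.y := Commute.units_zpow_left D.hty e
  refine D.mul_mem_Hom one_ne_zero (by rw [one_smul]; exact hz) (C (q ^ (-(e * g.2.1)))) ?_ ha
  have h := D.xp_commute hx hy g.1
  have h2 := congrArg (Units.val) (D.t_s_zpow hq g.2.1 e)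
  rw [Units.val_mul, Units.val_mul, Units.val_mul, val_qu_zpow] at h2
  rw [mon, mon, aeval_C, zpow_add, Units.val_mul, ← mul_assoc, ← mul_assoc, h.eq,
    mul_assoc (D.xp g.1), h2]
  simp only [← mul_assoc]
  rw [Algebra.commutes _ (D.xp g.1)]

lemma x_mem (hp : p ≠ 0) (hp1 : p - 1 ≠ 0) (g : Idx) {a : B} (ha : a ∈ D.Hom g) :
    D.x * a ∈ D.Hom (1 + g.1, g.2) := by
  obtain ⟨R, hR⟩ := D.x_xp hp1 g.1
  refine D.mul_mem_Hom hp D.x_z R ?_ ha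
  simp only [mon, ← mul_assoc, hR]

lemma y_mem (hp : p ≠ 0) (hp1 : p - 1 ≠ 0) (g : Idx) {a : B} (ha : a ∈ D.Hom g) :
    D.y * a ∈ D.Hom (-1 + g.1, g.2) := by
  obtain ⟨R, hR⟩ := D.y_xp hp1 g.1
  refine D.mul_mem_Hom (inv_ne_zero hp) ?_ R ?_ ha
  · rw [D.z_y, smul_smul, inv_mul_cancel₀ hp, one_smul]
  · simp only [mon, ← mul_assoc, hR]

lemma z_mem (g : Idx) {a : B} (ha : a ∈ D.Hom g) : (D.z : B) * a ∈ D.Hom g :=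
  D.mul_mem_Hom one_ne_zero (by rw [one_smul]) X (by simp) ha

lemma z_inv_mem (g : Idx) {a : B} (ha : a ∈ D.Hom g) : ((D.z⁻¹ : Bˣ) : B) * a ∈ D.Hom g := by
  obtain ⟨n, P, h⟩ := ha
  exact ⟨n + 1, P, by rw [← h, pow_succ, mul_assoc, Units.mul_inv_cancel_left]⟩

lemma one_mem_Hom : (1 : B) ∈ D.Hom 0 := ⟨0, 1, by simp [mon, xp]⟩

/-- The homogeneous components span: the elements whose left multiplication preserves their sum
form a subalgebra that contains all generators. -/
lemma iSup_Hom (hp : p ≠ 0) (hq : q ≠ 0) (hp1 : p - 1 ≠ 0) : ⨆ g, D.Hom g = ⊤ := by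
  let S : Subalgebra k B :=
    { carrier := {a | ∀ b ∈ ⨆ g, D.Hom g, a * b ∈ ⨆ g, D.Hom g}
      mul_mem' := fun {a b} ha hb c hc => by rw [mul_assoc]; exact ha _ (hb _ hc)
      add_mem' := fun {a b} ha hb c hc => by rw [add_mul]; exact add_mem (ha _ hc) (hb _ hc)
      algebraMap_mem' := fun r c hc => by
        rw [← Algebra.smul_def]; exact Submodule.smul_mem _ _ hc }
  have key : ∀ (w : B) (f : Idx → Idx), (∀ g, ∀ a ∈ D.Hom g, w * a ∈ D.Hom (f g)) → w ∈ S := by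
    intro w f hw b hb
    have : (⨆ g, D.Hom g) ≤ (⨆ g, D.Hom g).comap (LinearMap.mulLeft k w) :=
      iSup_le fun g a ha => Submodule.mem_iSup_of_mem (f g) (hw g a ha)
    exact this hb
  have hS : S = ⊤ := by
    apply D.gen
    · exact key _ _ fun g a => D.x_mem hp hp1 g
    · exact key _ _ fun g a => D.y_mem hp hp1 g
    · exact key _ _ fun g a => D.z_mem g
    · exact key _ _ fun g a => by simpa using D.s_mem 1 g (a := a)
    · exact key _ _ fun g a => by simpa using D.t_mem hq 1 g (a := a)
    · exact key _ _ fun g a => D.z_inv_mem g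
    · exact key _ _ fun g a => by simpa using D.s_mem (-1) g (a := a)
    · exact key _ _ fun g a => by simpa using D.t_mem hq (-1) g (a := a)
  rw [eq_top_iff]
  intro b _
  have hb : b ∈ S := hS ▸ Algebra.mem_top
  have := hb 1 (Submodule.mem_iSup_of_mem 0 D.one_mem_Hom)
  rwa [mul_one] at this

lemma nontriv (D : QWeyl k p q B) : Nontrivial B := by
  refine ⟨1, 0, fun h => ?_⟩
  have h1 := congrArg D.ρ h
  rw [map_one, map_zero] at h1
  have h2 := congrFun (LinearMap.congr_fun h1 (fun _ => 1)) 0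
  simp at h2

/-! ### Units are homogeneous of `x`-degree zero -/

/-- Every element is a finite sum of homogeneous elements acting by eventually nonvanishing
shifts of distinct degrees. -/
lemma exists_decomp (hp : p ≠ 0) (hq : q ≠ 0) (hpru : ∀ n : ℕ, 0 < n → p ^ n ≠ 1) (b : B) :
    ∃ (A : Finset Idx) (a : Idx → B) (c : Idx → Idx → k), b = ∑ g ∈ A, a g ∧
      (∀ g, a g ∈ D.Hom g) ∧ ∀ g ∈ A, D.ρ (a g) = W g (c g) ∧ EvNZ (c g) := by
  have hb : b ∈ ⨆ g, D.Hom g := by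
    rw [D.iSup_Hom hp hq (p_sub_one hpru)]; trivial
  obtain ⟨f, hf, rfl⟩ := (Submodule.mem_iSup_iff_exists_finsupp _ _).1 hb
  have : ∀ g, ∃ c, g ∈ f.support → D.ρ (f g) = W g c ∧ EvNZ c := by
    intro g
    by_cases hg : g ∈ f.support
    · obtain ⟨c, hc⟩ := D.isShift_of_mem hp hq hpru (hf g) (Finsupp.mem_support_iff.1 hg)
      exact ⟨c, fun _ => hc⟩
    · exact ⟨0, fun h => absurd h hg⟩
  choose c hc using this
  exact ⟨f.support, f, c, rfl, hf, hc⟩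

/-- Units are homogeneous. In `u u⁻¹ = 1` a pair of degrees with a unique sum contributes an
operator that nothing cancels, so its sum must be `0`. Since `ℤ³` has the two-unique-sums property,
supports that are not both singletons would produce two such pairs with the same sum,
contradicting uniqueness. -/
lemma unit_homogeneous (hp : p ≠ 0) (hq : q ≠ 0) (hpru : ∀ n : ℕ, 0 < n → p ^ n ≠ 1)
    (u : Bˣ) : ∃ g : Idx, (u : B) ∈ D.Hom g ∧ ((u⁻¹ : Bˣ) : B) ∈ D.Hom (-g) := by
  have := D.nontriv
  obtain ⟨A, a, c, hu, ha, hc⟩ := D.exists_decomp hp hq hpru u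
  obtain ⟨A', b, d, hv, hb, hd⟩ := D.exists_decomp hp hq hpru (u⁻¹ : Bˣ)
  have huv : D.ρ u * D.ρ (u⁻¹ : Bˣ) = W 0 (fun _ => 1) := by rw [← map_mul, W_one]; simp
  have hsum : ∑ g ∈ A, ∑ g' ∈ A', W (g + g') (fun h => c g h * d g' (h + g)) =
      W 0 (fun _ => 1) := by
    rw [← huv, hu, hv, map_sum, map_sum, Finset.sum_mul_sum]
    refine Finset.sum_congr rfl fun g hg => Finset.sum_congr rfl fun g' hg' => ?_
    rw [(hc g hg).1, (hd g' hg').1, W_mul]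
  -- Apply both sides to a delta function placed where the weight of the product is nonzero.
  have key : ∀ g ∈ A, ∀ g' ∈ A', UniqueAdd A A' g g' → g + g' = 0 := by
    intro g hg g' hg' huniq
    by_contra hne
    obtain ⟨N, hN⟩ := (hc g hg).2.mul_shift (hd g' hg').2 g
    have h1 := congrFun (LinearMap.congr_fun hsum
      (Pi.single (((N, 0, 0) : Idx) + (g + g')) 1)) ((N, 0, 0) : Idx)
    simp only [LinearMap.sum_apply, Finset.sum_apply, W_single, Ne.symm hne, if_false] at h1
    rw [Finset.sum_eq_single g, Finset.sum_eq_single g'] at h1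
    · simp only [if_true] at h1
      exact hN _ le_rfl h1
    · intro g₂ hg₂ hne₂
      exact if_neg fun h => hne₂ (huniq hg hg₂ h).2
    · exact fun h => absurd hg' h
    · intro g₁ hg₁ hne₁
      exact Finset.sum_eq_zero fun g₂ hg₂ => if_neg fun h => hne₁ (huniq hg₁ hg₂ h).1
    · exact fun h => absurd hg h
  have hA : A.Nonempty := by
    rw [Finset.nonempty_iff_ne_empty]
    rintro rfl
    simp at hu
  have hA' : A'.Nonempty := by
    rw [Finset.nonempty_iff_ne_empty]
    rintro rfl
    simp at hv
  have hcard : ¬ 1 < A.card * A'.card := by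
    intro h
    obtain ⟨p1, h1, p2, h2, hne, hu1, hu2⟩ := TwoUniqueSums.uniqueAdd_of_one_lt_card h
    rw [Finset.mem_product] at h1 h2
    have e1 := key _ h1.1 _ h1.2 hu1
    have e2 := key _ h2.1 _ h2.2 hu2
    have := hu1 h2.1 h2.2 (e2.trans e1.symm)
    exact hne (Prod.ext this.1.symm this.2.symm)
  have c1 := hA.card_pos
  have c2 := hA'.card_pos
  have d1 : A.card = 1 := by nlinarith
  have d2 : A'.card = 1 := by nlinarith
  obtain ⟨g, rfl⟩ := Finset.card_eq_one.1 d1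
  obtain ⟨g', rfl⟩ := Finset.card_eq_one.1 d2
  have h0 : g + g' = 0 := by
    refine key g (by simp) g' (by simp) ?_
    intro x y hx hy _
    exact ⟨by simpa using hx, by simpa using hy⟩
  refine ⟨g, ?_, ?_⟩
  · rw [hu, Finset.sum_singleton]; exact ha g
  · rw [hv, Finset.sum_singleton, neg_eq_of_add_eq_zero_right h0]
    apply hb

/-- A unit of negative `x`-degree would have image inside the functions vanishing at the origin,
whereas `z ^ n` maps the constant function `1` outside of them. -/
lemma not_neg_degree (hp : p ≠ 0) (hpru : ∀ n : ℕ, 0 < n → p ^ n ≠ 1) (u : Bˣ) {g : Idx}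
    (hu : (u : B) ∈ D.Hom g) : 0 ≤ g.1 := by
  by_contra hneg
  obtain ⟨n, P, h⟩ := hu
  have e : (D.z : B) ^ n * u * ((u⁻¹ : Bˣ) : B) = D.z ^ n := by simp
  rw [h] at e
  have e1 := congrFun (LinearMap.congr_fun (congrArg D.ρ e) (fun _ => 1)) 0
  have e2 := D.ρ_aeval hp hpru (X ^ n)
  rw [map_pow, aeval_X] at e2
  have hv := fun F => D.mon_vanish (g := g) (by omega) F 0 0
  rw [map_mul, map_mul, D.ρ_aeval hp hpru, e2] at e1
  have h00 : (0 : Idx) = (0, 0, 0) := rfl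
  simp [Module.End.mul_apply, h00, hv] at e1

/-- Up to a power of `z`, every unit is a polynomial in `z` times `s ^ i t ^ j`: neither the unit
nor its inverse has negative `x`-degree, so this degree is `0`. -/
lemma unit_normal_form (hp : p ≠ 0) (hq : q ≠ 0) (hpru : ∀ n : ℕ, 0 < n → p ^ n ≠ 1)
    (u : Bˣ) : ∃ (n : ℕ) (P : k[X]) (i j : ℤ),
      (D.z : B) ^ n * u = aeval (D.z : B) P * ((D.s ^ i * D.t ^ j : Bˣ) : B) := by
  obtain ⟨g, h1, h2⟩ := D.unit_homogeneous hp hq hpru u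
  have e1 := D.not_neg_degree hp hpru u h1
  have e2 := D.not_neg_degree hp hpru _ h2
  have e : g.1 = 0 := by simp at e2; omega
  obtain ⟨n, P, h⟩ := h1
  exact ⟨n, P, g.2.1, g.2.2, by rw [h, mon, e]; simp [xp]⟩

lemma commute_z (hp : p ≠ 0) (hq : q ≠ 0) (hpru : ∀ n : ℕ, 0 < n → p ^ n ≠ 1)
    (u : Bˣ) : Commute (D.z : B) u := by
  obtain ⟨n, P, i, j, h⟩ := D.unit_normal_form hp hq hpru u
  have hP : Commute (D.z : B) (aeval (D.z : B) P) := by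
    have := D.semi_aeval (w := (D.z : B)) (r := 1) (by rw [one_smul]) P
    unfold Commute SemiconjBy
    simpa using this
  have hs : Commute (D.z : B) ((D.s ^ i : Bˣ) : B) := (Commute.units_zpow_left D.s_z i).symm
  have ht : Commute (D.z : B) ((D.t ^ j : Bˣ) : B) := (Commute.units_zpow_left D.t_z j).symm
  have hc : Commute (D.z : B) ((D.z : B) ^ n * u) := by
    rw [h, Units.val_mul]; exact hP.mul_right (hs.mul_right ht)
  have e : (u : B) = ((D.z ^ (-(n : ℤ)) : Bˣ) : B) * ((D.z : B) ^ n * u) := by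
    rw [← Units.val_pow_eq_pow_val, ← Units.val_mul, ← Units.val_mul]; simp
  rw [e]
  exact (Commute.units_zpow_right (Commute.refl _) _).mul_right hc

/-! ### Units commuting with `s` and `t` -/

/-- A unit commuting with `s` and `t` has no `s, t` part: `s ^ i t ^ j` commutes with `s` up to
a factor `q ^ (±j)` and with `t` up to a factor `q ^ (±i)`, and `q` is not a root of unity. -/
lemma unit_eq_poly (hp : p ≠ 0) (hq : q ≠ 0) (hpru : ∀ n : ℕ, 0 < n → p ^ n ≠ 1)
    (hqru : ∀ n : ℕ, 0 < n → q ^ n ≠ 1) (u : Bˣ) (hs : Commute u D.s) (ht : Commute u D.t) :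
    ∃ (n : ℕ) (P : k[X]), (D.z : B) ^ n * u = aeval (D.z : B) P := by
  have := D.nontriv
  obtain ⟨n, P, i, j, h⟩ := D.unit_normal_form hp hq hpru u
  have zs : Commute D.z D.s := Units.ext D.s_z.symm
  have zt : Commute D.z D.t := Units.ext D.t_z.symm
  set m : Bˣ := D.s ^ i * D.t ^ j with hm
  let v : Bˣ := D.z ^ n * u * m⁻¹
  have hv : (v : B) = aeval (D.z : B) P := by
    simp [v, h]
  have hcomm : ∀ w : Bˣ, (w : B) * D.z = D.z * w → Commute v w := by
    intro w hw
    apply Units.ext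
    rw [Units.val_mul v w, Units.val_mul w v, hv]
    have := D.semi_aeval (w := (w : B)) (r := 1) (by rw [hw, one_smul]) P
    simpa using this.symm
  have hmv : m = v⁻¹ * (D.z ^ n * u) := by simp only [v]; group
  have ms : Commute m D.s := by
    rw [hmv]
    exact (hcomm _ D.s_z).inv_left.mul_left ((zs.pow_left n).mul_left hs)
  have mt : Commute m D.t := by
    rw [hmv]
    exact (hcomm _ D.t_z).inv_left.mul_left ((zt.pow_left n).mul_left ht)
  have hQ : ∀ l : ℤ, qu (B := B) hq ^ l = 1 → l = 0 := by
    intro l hl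
    have := congrArg Units.val hl
    rw [val_qu_zpow, Units.val_one, ← map_one (algebraMap k B)] at this
    exact zpow_ne hqru ((algebraMap k B).injective this)
  have hj : j = 0 := by
    have h1 : Commute (D.t ^ j) D.s := by
      have : D.t ^ j = (D.s ^ i)⁻¹ * m := by simp [hm]
      rw [this]
      exact ((Commute.refl D.s).zpow_left i).inv_left.mul_left ms
    have h2 := D.t_s_zpow hq 1 j
    rw [zpow_one, h1.eq, mul_assoc] at h2
    simpa using hQ _ (right_eq_mul.1 h2)
  have hi : i = 0 := by
    have h1 : Commute (D.s ^ i) D.t := by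
      have : D.s ^ i = m * (D.t ^ j)⁻¹ := by simp [hm]
      rw [this]
      exact mt.mul_left ((Commute.refl D.t).zpow_left j).inv_left
    have h2 := D.t_s_zpow hq i 1
    rw [zpow_one, ← h1.eq, mul_assoc] at h2
    simpa using hQ _ (right_eq_mul.1 h2)
  exact ⟨n, P, by rw [h, hm, hi, hj]; simp⟩

lemma aeval_injective (hp : p ≠ 0) (hpru : ∀ n : ℕ, 0 < n → p ^ n ≠ 1) :
    Function.Injective (aeval (R := k) (D.z : B)) := by
  rw [injective_iff_map_eq_zero]
  intro P hP
  by_contra hne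
  obtain ⟨N, hN⟩ := evNZ_eval hp hpru hne
  have h1 := D.ρ_aeval hp hpru P
  rw [hP, map_zero] at h1
  have h2 := congrFun (LinearMap.congr_fun h1 (fun _ => 1)) (N, 0, 0)
  apply hN (N, 0, 0) le_rfl
  simpa using h2.symm

/-- A unit commuting with `s` and `t`, and its inverse, are Laurent polynomials in `z`; hence it is
a scalar times a power of `z`. -/
lemma unit_eq_zpow (hp : p ≠ 0) (hq : q ≠ 0) (hpru : ∀ n : ℕ, 0 < n → p ^ n ≠ 1)
    (hqru : ∀ n : ℕ, 0 < n → q ^ n ≠ 1) (u : Bˣ) (hs : Commute u D.s) (ht : Commute u D.t) :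
    ∃ (α : k) (i : ℤ), α ≠ 0 ∧ (u : B) = α • ((D.z ^ i : Bˣ) : B) := by
  obtain ⟨n, P, hP⟩ := D.unit_eq_poly hp hq hpru hqru u hs ht
  obtain ⟨m, Q, hQ⟩ := D.unit_eq_poly hp hq hpru hqru u⁻¹ hs.inv_left ht.inv_left
  have hz := D.commute_z hp hq hpru u
  have hPQ : P * Q = X ^ (n + m) := by
    apply D.aeval_injective hp hpru
    rw [map_mul, ← hP, ← hQ, map_pow, aeval_X, (hz.pow_left n).eq, mul_assoc,
      ← mul_assoc ((D.z : B) ^ n), ← pow_add, ← mul_assoc, ← (hz.pow_left (n + m)).eq]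
    simp
  obtain ⟨i, -, hi⟩ := (dvd_prime_pow prime_X (n + m)).1 ⟨Q, hPQ.symm⟩
  obtain ⟨w, hw⟩ := hi.symm
  obtain ⟨α, hα, hαw⟩ := Polynomial.isUnit_iff.1 w.isUnit
  refine ⟨α, -(n : ℤ) + i, hα.ne_zero, ?_⟩
  have e : (u : B) = ((D.z ^ (-(n : ℤ)) : Bˣ) : B) * ((D.z : B) ^ n * u) := by
    rw [← Units.val_pow_eq_pow_val, ← Units.val_mul, ← Units.val_mul]; simp
  rw [e, hP, ← hw, ← hαw, map_mul, aeval_C, map_pow, aeval_X, ← Algebra.commutes,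
    ← Algebra.smul_def, mul_smul_comm, zpow_add, Units.val_mul]
  simp

lemma ρ_zpow (hp : p ≠ 0) (hpru : ∀ n : ℕ, 0 < n → p ^ n ≠ 1) (i : ℤ) :
    D.ρ ((D.z ^ i : Bˣ) : B) = W 0 (fun h => (p ^ h.1) ^ i) := by
  obtain ⟨n, rfl | rfl⟩ := i.eq_nat_or_neg
  · have := D.ρ_aeval hp hpru (X ^ n)
    simpa using this
  · have := D.ρ_aeval hp hpru (X ^ n)
    have h2 := D.ρ_inv (D.z ^ n) 0 _ (by simpa using this) (fun h => by
      simpa using pow_ne_zero n (zpow_ne_zero h.1 hp))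
    simpa using h2

lemma zpow_eq (hp : p ≠ 0) (hpru : ∀ n : ℕ, 0 < n → p ^ n ≠ 1) {α β : k} {i j : ℤ}
    (h : α • ((D.z ^ i : Bˣ) : B) = β • ((D.z ^ j : Bˣ) : B)) (hα : α ≠ 0) : i = j := by
  have h1 := congrArg D.ρ h
  rw [map_smul, map_smul, D.ρ_zpow hp hpru, D.ρ_zpow hp hpru] at h1
  have e0 := congrFun (LinearMap.congr_fun h1 (fun _ => 1)) (0, 0, 0)
  have e1 := congrFun (LinearMap.congr_fun h1 (fun _ => 1)) (1, 0, 0)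
  simp at e0 e1
  rw [← e0] at e1
  have e2 := mul_left_cancel₀ hα e1
  have : p ^ (i - j) = 1 := by
    rw [zpow_sub₀ hp, e2]; exact div_self (zpow_ne_zero _ hp)
  have := zpow_ne hpru this
  omega

/-- Since `z` commutes with all units, so does `φ z`, hence `φ z = α z ^ i`. The same holds for
`φ⁻¹` with an exponent `j`, and `i j = 1` gives `i = ±1`. -/
theorem aut_z (hp : p ≠ 0) (hq : q ≠ 0) (hpru : ∀ n : ℕ, 0 < n → p ^ n ≠ 1)
    (hqru : ∀ n : ℕ, 0 < n → q ^ n ≠ 1) (φ : B ≃ₐ[k] B) :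
    ∃ α : k, α ≠ 0 ∧ (φ D.z = α • (D.z : B) ∨ φ D.z = α • ((D.z⁻¹ : Bˣ) : B)) := by
  have main : ∀ φ : B ≃ₐ[k] B, ∃ (α : k) (i : ℤ), α ≠ 0 ∧ φ D.z = α • ((D.z ^ i : Bˣ) : B) := by
    intro φ
    have hc : ∀ w : Bˣ, Commute (Units.map (φ : B →* B) D.z) w := by
      intro w
      have := D.commute_z hp hq hpru (Units.map (φ.symm : B →* B) w)
      have h2 := congrArg φ this.eq
      apply Units.ext
      simpa using h2
    simpa using D.unit_eq_zpow hp hq hpru hqru (Units.map (φ : B →* B) D.z) (hc _) (hc _)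
  obtain ⟨α, i, hα, h1⟩ := main φ
  obtain ⟨β, j, hβ, h2⟩ := main φ.symm
  have h3 : ∀ j : ℤ, φ ((D.z ^ j : Bˣ) : B) = α ^ j • ((D.z ^ (i * j) : Bˣ) : B) := by
    intro j
    have e : Units.map (φ : B →* B) D.z = qu (B := B) hα * D.z ^ i := by
      apply Units.ext
      simpa [qu, Algebra.smul_def] using h1
    have e2 : Units.map (φ : B →* B) (D.z ^ j) = qu (B := B) hα ^ j * (D.z ^ i) ^ j := by
      rw [map_zpow, e, Commute.mul_zpow (qu_comm hα _)]
    have e3 := congrArg Units.val e2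
    rw [Units.val_mul, val_qu_zpow] at e3
    rw [Algebra.smul_def, zpow_mul]
    exact e3
  have h4 : (1 : k) • ((D.z ^ (1 : ℤ) : Bˣ) : B) = (β * α ^ j) • ((D.z ^ (i * j) : Bˣ) : B) := by
    have := congrArg φ h2
    rw [AlgEquiv.apply_symm_apply, map_smul, h3, smul_smul] at this
    simpa using this
  have h5 := D.zpow_eq hp hpru h4 one_ne_zero
  refine ⟨α, hα, ?_⟩
  rcases Int.eq_one_or_neg_one_of_mul_eq_one h5.symm with rfl | rfl
  · left; simpa using h1
  · right; simpa using h1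

/-! ### Positive and negative automorphisms -/

lemma neg_z_inv {φ : B ≃ₐ[k] B} {α : k} (hα : α ≠ 0)
    (h : φ D.z = α • ((D.z⁻¹ : Bˣ) : B)) : φ ((D.z⁻¹ : Bˣ) : B) = α⁻¹ • (D.z : B) := by
  have h1 : φ D.z * (D.z : B) = α • 1 := by rw [h, smul_mul_assoc, Units.inv_mul]
  have h2 : φ ((D.z⁻¹ : Bˣ) : B) * φ D.z = 1 := by rw [← map_mul, Units.inv_mul, map_one]
  have h3 : φ ((D.z⁻¹ : Bˣ) : B) * (φ D.z * (D.z : B)) = D.z := by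
    rw [← mul_assoc, h2, one_mul]
  rw [h1, mul_smul_comm, mul_one] at h3
  rw [← h3, smul_smul, inv_mul_cancel₀ hα, one_smul]

/-- `φ` is of positive type: `φ z = α z` with `α ≠ 0`. -/
def Pos (φ : B ≃ₐ[k] B) : Prop := ∃ α : kˣ, φ D.z = (α : k) • (D.z : B)

/-- `φ` is of negative type: `φ z = α z⁻¹` with `α ≠ 0`. -/
def Neg (φ : B ≃ₐ[k] B) : Prop := ∃ α : kˣ, φ D.z = (α : k) • ((D.z⁻¹ : Bˣ) : B)

variable {D}

lemma Pos.mul {φ φ' : B ≃ₐ[k] B} (h : D.Pos φ) (h' : D.Pos φ') : D.Pos (φ * φ') := by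
  obtain ⟨α, h⟩ := h
  obtain ⟨β, h'⟩ := h'
  exact ⟨β * α, by rw [AlgEquiv.mul_apply, h', map_smul, h, smul_smul, Units.val_mul]⟩

lemma Pos.inv {φ : B ≃ₐ[k] B} (h : D.Pos φ) : D.Pos φ⁻¹ := by
  obtain ⟨α, h⟩ := h
  refine ⟨α⁻¹, φ.injective ?_⟩
  rw [← AlgEquiv.mul_apply, mul_inv_cancel, AlgEquiv.one_apply, map_smul, h, smul_smul]
  simp

lemma Neg.mul {φ φ' : B ≃ₐ[k] B} (h : D.Neg φ) (h' : D.Neg φ') : D.Pos (φ * φ') := by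
  obtain ⟨α, h⟩ := h
  obtain ⟨β, h'⟩ := h'
  exact ⟨β * α⁻¹, by
    rw [AlgEquiv.mul_apply, h', map_smul, D.neg_z_inv α.ne_zero h, smul_smul]; simp⟩

lemma Neg.mul_pos {φ φ' : B ≃ₐ[k] B} (h : D.Neg φ) (h' : D.Pos φ') : D.Neg (φ * φ') := by
  obtain ⟨α, h⟩ := h
  obtain ⟨β, h'⟩ := h'
  exact ⟨β * α, by rw [AlgEquiv.mul_apply, h', map_smul, h, smul_smul, Units.val_mul]⟩

lemma Neg.inv {φ : B ≃ₐ[k] B} (h : D.Neg φ) : D.Neg φ⁻¹ := by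
  obtain ⟨α, h⟩ := h
  refine ⟨α, φ.injective ?_⟩
  rw [← AlgEquiv.mul_apply, mul_inv_cancel, AlgEquiv.one_apply, map_smul,
    D.neg_z_inv α.ne_zero h, smul_smul]
  simp

lemma not_pos_neg (hp : p ≠ 0) (hpru : ∀ n : ℕ, 0 < n → p ^ n ≠ 1) {φ : B ≃ₐ[k] B} :
    ¬ (D.Pos φ ∧ D.Neg φ) := by
  rintro ⟨⟨α, h⟩, β, h'⟩
  have : (1 : ℤ) = -1 := D.zpow_eq hp hpru (α := (α : k)) (β := (β : k))
    (by simpa using h.symm.trans h') α.ne_zero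
  omega

lemma psi_z (hp : p ≠ 0) {ψ : B ≃ₐ[k] B} (hx : ψ D.x = D.y)
    (hy : ψ D.y = (-p⁻¹) • (((D.z⁻¹ : Bˣ) : B) * D.x)) :
    ψ D.z = p⁻¹ • ((D.z⁻¹ : Bˣ) : B) := by
  have h : D.y * ((D.z⁻¹ : Bˣ) : B) = p • (((D.z⁻¹ : Bˣ) : B) * D.y) := by
    have h1 : ((D.z⁻¹ : Bˣ) : B) * ((D.z : B) * D.y) * ((D.z⁻¹ : Bˣ) : B) =
        ((D.z⁻¹ : Bˣ) : B) * (p • (D.y * D.z)) * ((D.z⁻¹ : Bˣ) : B) := by rw [D.z_y]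
    rwa [Units.inv_mul_cancel_left, mul_smul_comm, smul_mul_assoc, ← mul_assoc,
      Units.mul_inv_cancel_right] at h1
  rw [D.hz, map_sub, map_mul, map_mul, hx, hy, mul_smul_comm, ← mul_assoc, h, smul_mul_assoc,
    smul_mul_assoc, smul_smul, mul_assoc, mul_assoc, D.hxy, mul_add, mul_one, mul_smul_comm,
    smul_add, smul_smul]
  have e1 : -p⁻¹ * p = -1 := by field_simp
  rw [e1]
  module

/-- The group-theoretic conclusion: a product of two negative automorphisms is positive, so the
existence of the negative automorphism `ψ` makes the positive ones a subgroup of index `2`. -/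
theorem group_structure (hp : p ≠ 0) (hq : q ≠ 0) (hpru : ∀ n : ℕ, 0 < n → p ^ n ≠ 1)
    (hqru : ∀ n : ℕ, 0 < n → q ^ n ≠ 1) {ψ : B ≃ₐ[k] B} (hx : ψ D.x = D.y)
    (hy : ψ D.y = (-p⁻¹) • (((D.z⁻¹ : Bˣ) : B) * D.x)) :
    ψ D.z = p⁻¹ • ((D.z⁻¹ : Bˣ) : B) ∧
    (∀ φ : B ≃ₐ[k] B, (D.Pos φ ∨ D.Neg φ) ∧ ¬ (D.Pos φ ∧ D.Neg φ)) ∧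
    {φ | D.Neg φ} = (fun φ => ψ⁻¹ * φ) '' {φ | D.Pos φ} ∧
    (Set.univ : Set (B ≃ₐ[k] B)) = {φ | D.Pos φ} ∪ {φ | D.Neg φ} ∧
    Disjoint {φ | D.Pos φ} {φ | D.Neg φ} ∧
    ∃ Gp : Subgroup (B ≃ₐ[k] B), (Gp : Set (B ≃ₐ[k] B)) = {φ | D.Pos φ} ∧
      Gp.Normal ∧ Gp.index = 2 ∧
      ∃ π : (B ≃ₐ[k] B) →* Multiplicative (ZMod 2), Function.Surjective π ∧ π.ker = Gp := by
  have hψ := psi_z hp hx hy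
  have hneg : D.Neg ψ := ⟨(Units.mk0 p hp)⁻¹, by simpa using hψ⟩
  have hdich : ∀ φ : B ≃ₐ[k] B, D.Pos φ ∨ D.Neg φ := by
    intro φ
    obtain ⟨α, hα, h | h⟩ := D.aut_z hp hq hpru hqru φ
    · exact Or.inl ⟨Units.mk0 α hα, h⟩
    · exact Or.inr ⟨Units.mk0 α hα, h⟩
  have hnot : ∀ φ : B ≃ₐ[k] B, ¬ (D.Pos φ ∧ D.Neg φ) := fun φ => not_pos_neg hp hpru
  let Gp : Subgroup (B ≃ₐ[k] B) :=
    { carrier := {φ | D.Pos φ}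
      mul_mem' := Pos.mul
      one_mem' := ⟨1, by simp⟩
      inv_mem' := Pos.inv }
  have hindex : Gp.index = 2 := by
    rw [Subgroup.index_eq_two_iff_exists_notMem_and']
    exact ⟨ψ, fun h => hnot ψ ⟨h, hneg⟩, fun φ => (hdich φ).symm.imp hneg.mul id⟩
  have hnormal : Gp.Normal := Subgroup.normal_of_index_eq_two hindex
  refine ⟨hψ, fun φ => ⟨hdich φ, hnot φ⟩, ?_, ?_, ?_, Gp, rfl, hnormal, hindex, ?_⟩
  · ext φ
    constructor
    · intro h
      exact ⟨ψ * φ, hneg.mul h, inv_mul_cancel_left ψ φ⟩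
    · rintro ⟨φ', h, rfl⟩
      exact hneg.inv.mul_pos h
  · ext φ
    simpa using hdich φ
  · rw [Set.disjoint_left]
    exact fun φ h h' => hnot φ ⟨h, h'⟩
  · have h1 : Nat.card ((B ≃ₐ[k] B) ⧸ Gp) = 2 := hindex
    have h2 : Nat.card (Multiplicative (ZMod 2)) = 2 := by simp
    have : Fact (Nat.Prime 2) := ⟨Nat.prime_two⟩
    let e := mulEquivOfPrimeCardEq h1 h2
    refine ⟨(e : ((B ≃ₐ[k] B) ⧸ Gp) →* Multiplicative (ZMod 2)).comp (QuotientGroup.mk' Gp),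
      e.surjective.comp (QuotientGroup.mk'_surjective Gp), ?_⟩
    rw [MonoidHom.ker_mulEquiv_comp, QuotientGroup.ker_mk']

end QWeyl

section Concrete

/-! ### The representation of `A_S` and its generators -/

/-- The weighted shifts by which `x, y, s, t` act. -/
def genOp (i : Fin 4) : Module.End K (Idx → K) :=
  ![W (1, 0, 0) (fun _ => 1), W (-1, 0, 0) (fun h => (p ^ h.1 - 1) / (p - 1)),
    W (0, 1, 0) (fun _ => 1), W (0, 0, 1) (fun h => q ^ h.2.1)] i

lemma genOp_rel {K : Type*} [Field K] {p q : K} (hp : p ≠ 0) (hq : q ≠ 0) (hp1 : p - 1 ≠ 0)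
    ⦃a b : FreeAlgebra K (Fin 4)⦄ (h : ExtWeylRel K p q 1 1 a b) :
    FreeAlgebra.lift K (genOp K p q) a = FreeAlgebra.lift K (genOp K p q) b := by
  cases h
  case weyl =>
    rw [map_sub, map_smul, map_mul, map_mul, map_one, FreeAlgebra.lift_ι_apply,
      FreeAlgebra.lift_ι_apply]
    ext F h
    have h0 : h + ((0 : ℤ), (0 : ℤ), (0 : ℤ)) = h := add_zero h
    simp [genOp, W_mul, zpow_add₀ hp, h0]
    field_simp
    ring
  all_goals
    simp only [map_smul, map_mul, FreeAlgebra.lift_ι_apply]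
    ext F h
    simp [genOp, W_mul, zpow_add₀ hq, mul_comm, mul_assoc]

/-- The representation of `A` by weighted shifts. -/
def repA {K : Type*} [Field K] {p q : K} (hp : p ≠ 0) (hq : q ≠ 0) (hp1 : p - 1 ≠ 0) :
    ExtWeyl K p q 1 1 →ₐ[K] Module.End K (Idx → K) :=
  RingQuot.liftAlgHom K ⟨FreeAlgebra.lift K (genOp K p q), genOp_rel hp hq hp1⟩

lemma repA_mk {K : Type*} [Field K] {p q : K} (hp : p ≠ 0) (hq : q ≠ 0) (hp1 : p - 1 ≠ 0)
    (i : Fin 4) : repA hp hq hp1 (RingQuot.mkAlgHom K _ (ι K i)) = genOp K p q i := by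
  rw [repA, RingQuot.liftAlgHom_mkAlgHom_apply, FreeAlgebra.lift_ι_apply]

lemma isUnit_W {K : Type*} [Field K] (g : Idx) (c : Idx → K) (hc : ∀ h, c h ≠ 0) :
    IsUnit (W g c) := by
  refine isUnit_iff_exists.2 ⟨W (-g) (fun h => (c (h - g))⁻¹), ?_, ?_⟩
  · rw [W_mul, ← W_one]
    congr 1
    · simp
    · ext h; simpa using mul_inv_cancel₀ (hc _)
  · rw [W_mul, ← W_one]
    congr 1
    · simp
    · ext h; rw [← sub_eq_add_neg]; exact inv_mul_cancel₀ (hc _)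

/-- The weights of `z`, `s` and `t` vanish nowhere, so the Ore set acts by invertible operators. -/
lemma repA_isUnit {K : Type*} [Field K] {p q : K} (hp : p ≠ 0) (hq : q ≠ 0) (hp1 : p - 1 ≠ 0)
    (a : locS K p q) : IsUnit
      (((repA hp hq hp1).toRingHom : ExtWeyl K p q 1 1 →* Module.End K (Idx → K)).comp
        (locS K p q).subtype a) := by
  obtain ⟨a, ha⟩ := a
  change IsUnit (repA hp hq hp1 a)
  induction ha using Submonoid.closure_induction with
  | mem a ha =>
    rcases ha with rfl | rfl | rfl
    · have : repA hp hq hp1 (wz K p q) = W 0 (fun h => p ^ h.1) := by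
        rw [wz, wx, wy, map_sub, map_mul, map_mul, repA_mk, repA_mk]
        ext F h
        have h0 : h + ((0 : ℤ), (0 : ℤ), (0 : ℤ)) = h := add_zero h
        simp [genOp, W_mul, zpow_add₀ hp, h0]
        field_simp
        ring
      rw [this]
      exact isUnit_W _ _ fun h => zpow_ne_zero _ hp
    · rw [ws, repA_mk]
      exact isUnit_W _ _ fun h => one_ne_zero
    · rw [wt, repA_mk]
      exact isUnit_W _ _ fun h => zpow_ne_zero _ hq
  | one => simp
  | mul a b _ _ ha hb => rw [map_mul]; exact ha.mul hb

variable {K p q}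

/-- The extension of the representation to `A_S`, as a ring homomorphism. -/
def repLocRing (hp : p ≠ 0) (hq : q ≠ 0) (hp1 : p - 1 ≠ 0) :
    ALoc K p q →+* Module.End K (Idx → K) :=
  OreLocalization.universalHom (repA hp hq hp1).toRingHom
    (IsUnit.liftRight _ (repA_isUnit hp hq hp1)) (fun _ => rfl)

lemma repLocRing_num (hp : p ≠ 0) (hq : q ≠ 0) (hp1 : p - 1 ≠ 0) (a : ExtWeyl K p q 1 1) :
    repLocRing hp hq hp1 (OreLocalization.numeratorRingHom a) = repA hp hq hp1 a :=
  OreLocalization.universalHom_commutes _ _ _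

/-- The representation of `A_S` by weighted shifts. -/
def repLoc (hp : p ≠ 0) (hq : q ≠ 0) (hp1 : p - 1 ≠ 0) :
    ALoc K p q →ₐ[K] Module.End K (Idx → K) :=
  { repLocRing hp hq hp1 with
    commutes' := fun r =>
      (repLocRing_num hp hq hp1 (algebraMap K _ r)).trans ((repA hp hq hp1).commutes r) }

lemma repLoc_num (hp : p ≠ 0) (hq : q ≠ 0) (hp1 : p - 1 ≠ 0) (a : ExtWeyl K p q 1 1) :
    repLoc hp hq hp1 (OreLocalization.numeratorRingHom a) = repA hp hq hp1 a :=
  repLocRing_num hp hq hp1 a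

variable (K p q) in
/-- The localization map `A → A_S` as an algebra homomorphism. -/
def numAlg : ExtWeyl K p q 1 1 →ₐ[K] ALoc K p q :=
  { OreLocalization.numeratorRingHom with commutes' := fun _ => rfl }

/-- As an algebra, `A_S` is generated by `x, y, s, t` and the inverses of `z, s, t`. -/
lemma aloc_gen (S : Subalgebra K (ALoc K p q)) (hx : lx K p q ∈ S) (hy : ly K p q ∈ S)
    (hs : ls K p q ∈ S) (ht : lt K p q ∈ S)
    (hz' : (((uz K p q)⁻¹ : (ALoc K p q)ˣ) : ALoc K p q) ∈ S)
    (hs' : (((us K p q)⁻¹ : (ALoc K p q)ˣ) : ALoc K p q) ∈ S)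
    (ht' : (((ut K p q)⁻¹ : (ALoc K p q)ˣ) : ALoc K p q) ∈ S) : S = ⊤ := by
  have hnum : ∀ a, numAlg K p q a ∈ S := by
    intro a
    obtain ⟨a, rfl⟩ := RingQuot.mkAlgHom_surjective K _ a
    induction a using FreeAlgebra.induction with
    | grade0 r => rw [AlgHom.commutes, AlgHom.commutes]; exact S.algebraMap_mem r
    | grade1 i =>
      fin_cases i
      exacts [hx, hy, hs, ht]
    | mul a b ha hb => rw [map_mul, map_mul]; exact S.mul_mem ha hb
    | add a b ha hb => rw [map_add, map_add]; exact S.add_mem ha hb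
  have hinv : ∀ a ∈ locS K p q, ∃ v ∈ S, v * numAlg K p q a = 1 := by
    intro a ha
    induction ha using Submonoid.closure_induction with
    | mem a ha =>
      rcases ha with rfl | rfl | rfl
      · exact ⟨_, hz', Units.inv_mul (uz K p q)⟩
      · exact ⟨_, hs', Units.inv_mul (us K p q)⟩
      · exact ⟨_, ht', Units.inv_mul (ut K p q)⟩
    | one => exact ⟨1, S.one_mem, by simp⟩
    | mul a b _ _ ha hb =>
      obtain ⟨v, hv, hva⟩ := ha
      obtain ⟨w, hw, hwb⟩ := hb
      refine ⟨w * v, S.mul_mem hw hv, ?_⟩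
      rw [map_mul, mul_assoc, ← mul_assoc v, hva, one_mul, hwb]
  rw [eq_top_iff]
  intro b _
  induction b using OreLocalization.ind with
  | _ r a =>
    obtain ⟨v, hv, hva⟩ := hinv a a.2
    have h1 : numAlg K p q a * (r /ₒ a) = numAlg K p q r := OreLocalization.mul_cancel
    have h2 : (r /ₒ a : ALoc K p q) = v * numAlg K p q r := by
      rw [← h1, ← mul_assoc, hva, one_mul]
    rw [h2]
    exact S.mul_mem hv (hnum r)

lemma aloc_rel {a b : FreeAlgebra K (Fin 4)} (h : ExtWeylRel K p q 1 1 a b) :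
    numAlg K p q (RingQuot.mkAlgHom K _ a) = numAlg K p q (RingQuot.mkAlgHom K _ b) :=
  congrArg _ (RingQuot.mkAlgHom_rel K h)

/-- The algebra `A_S` with its generators and its representation by weighted shifts. -/
def alocData (hp : p ≠ 0) (hq : q ≠ 0) (hp1 : p - 1 ≠ 0) : QWeyl K p q (ALoc K p q) where
  x := lx K p q
  y := ly K p q
  z := uz K p q
  s := us K p q
  t := ut K p q
  ρ := repLoc hp hq hp1
  hxy := by
    have h := aloc_rel (K := K) (p := p) (q := q) .weyl
    simp only [map_sub, map_mul, map_smul, map_one] at h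
    exact sub_eq_iff_eq_add.1 h
  hz := by
    change numAlg K p q (wz K p q) = _
    rw [wz, map_sub, map_mul, map_mul]
    rfl
  hst := by
    have h := aloc_rel (K := K) (p := p) (q := q) .st
    simp only [map_mul, map_smul] at h
    exact h
  hsx := by
    have h := aloc_rel (K := K) (p := p) (q := q) .sx
    simp only [map_mul, one_smul] at h
    exact h
  hsy := by
    have h := aloc_rel (K := K) (p := p) (q := q) .sy
    simp only [map_mul, inv_one, one_smul] at h
    exact h
  htx := by
    have h := aloc_rel (K := K) (p := p) (q := q) .tx
    simp only [map_mul, one_smul] at h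
    exact h
  hty := by
    have h := aloc_rel (K := K) (p := p) (q := q) .ty
    simp only [map_mul, inv_one, one_smul] at h
    exact h
  ρx := (repLoc_num hp hq hp1 _).trans (repA_mk hp hq hp1 0)
  ρy := (repLoc_num hp hq hp1 _).trans (repA_mk hp hq hp1 1)
  ρs := (repLoc_num hp hq hp1 _).trans (repA_mk hp hq hp1 2)
  ρt := (repLoc_num hp hq hp1 _).trans (repA_mk hp hq hp1 3)
  gen := fun S hx hy _ hs ht hz' hs' ht' => aloc_gen S hx hy hs ht hz' hs' ht'

end Concrete

end ExtWeylAut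

/-- Assume neither `p` nor `q` is a root of unity, and let `ψ₋` be the
`K`-algebra automorphism of `A_S` determined by `ψ₋(x) = y`, `ψ₋(y) = −p⁻¹z⁻¹x`,
`ψ₋(s) = s`, `ψ₋(t) = t` (so `ψ₋(z) = p⁻¹z⁻¹`). Then every automorphism of `A_S` is of
exactly one of positive or negative type, `Aut_K(A_S)` is the disjoint union of the set
`G₊` of positive-type automorphisms and `G₋ = ψ₋⁻¹ ∘ G₊`, `G₊` is a normal subgroup of
index 2, and there is a short exact sequence `1 → G₊ → Aut_K(A_S) → ℤ/2ℤ → 1`. -/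
theorem aloc_automorphism_group_structure
    (hp : p ≠ 0) (hq : q ≠ 0)
    (hpru : ∀ n : ℕ, 0 < n → p ^ n ≠ 1) (hqru : ∀ n : ℕ, 0 < n → q ^ n ≠ 1)
    (ψm : ALoc K p q ≃ₐ[K] ALoc K p q)
    (hψx : ψm (lx K p q) = ly K p q)
    (hψy : ψm (ly K p q) =
      (-p⁻¹) • ((((uz K p q)⁻¹ : (ALoc K p q)ˣ) : ALoc K p q) * lx K p q))
    (hψs : ψm (ls K p q) = ls K p q)
    (hψt : ψm (lt K p q) = lt K p q) :
    ψm (lz K p q) = p⁻¹ • (((uz K p q)⁻¹ : (ALoc K p q)ˣ) : ALoc K p q) ∧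
    (∀ φ : ALoc K p q ≃ₐ[K] ALoc K p q,
      (PosType K p q φ ∨ NegType K p q φ) ∧ ¬(PosType K p q φ ∧ NegType K p q φ)) ∧
    {φ : ALoc K p q ≃ₐ[K] ALoc K p q | NegType K p q φ} =
      (fun φ : ALoc K p q ≃ₐ[K] ALoc K p q => ψm⁻¹ * φ) ''
        {φ : ALoc K p q ≃ₐ[K] ALoc K p q | PosType K p q φ} ∧
    (Set.univ : Set (ALoc K p q ≃ₐ[K] ALoc K p q)) =
      {φ | PosType K p q φ} ∪ {φ | NegType K p q φ} ∧
    Disjoint {φ : ALoc K p q ≃ₐ[K] ALoc K p q | PosType K p q φ}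
      {φ : ALoc K p q ≃ₐ[K] ALoc K p q | NegType K p q φ} ∧
    ∃ Gp : Subgroup (ALoc K p q ≃ₐ[K] ALoc K p q),
      (Gp : Set (ALoc K p q ≃ₐ[K] ALoc K p q)) = {φ | PosType K p q φ} ∧
      Gp.Normal ∧ Gp.index = 2 ∧
      ∃ π : (ALoc K p q ≃ₐ[K] ALoc K p q) →* Multiplicative (ZMod 2),
        Function.Surjective π ∧ π.ker = Gp := by
  exact ExtWeylAut.QWeyl.group_structure
    (D := ExtWeylAut.alocData hp hq (ExtWeylAut.QWeyl.p_sub_one hpru)) hp hq hpru hqru hψx hψy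
end
end
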